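/- Let f, h ∈ O_n with μ_X(f) < ∞ and μ_Y(h) < ∞, where X = h^{-1}(0) and Y = f^{-1}(0) are hypersurface germs with isolated singularities. Then μ_X(f) = τ_X(f) if and only if the following three conditions hold: μ(f) = τ(f), μ(h) = τ(h), and dim_ℂ O_n/(⟨f⟩ + J(f,h)) − μ(f) = dim_ℂ Θ/(Θ_X + Θ_Y). -/

import Mathlib

open Filter Topology Polynomial

set_option maxHeartbeats 1000000
set_option synthInstance.maxHeartbeats 1000000

noncomputable section

/-- The algebra structure on germs of complex valued functions. -/
instance Filter.Germ.instAlgebraComplex {α : Type*} (l : Filter α) :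
    Algebra ℂ (Filter.Germ l ℂ) where
  algebraMap := (Filter.Germ.coeRingHom l).comp (algebraMap ℂ (α → ℂ))
  commutes' := fun c g => mul_comm _ _
  smul_def' := fun c g => Filter.Germ.inductionOn g fun f => rfl

/-- The local algebra `𝒪ₙ` of germs at `0 ∈ ℂⁿ` of holomorphic functions,
realized as the subalgebra of germs at `0` admitting an analytic representative. -/
def On (n : ℕ) : Subalgebra ℂ (Filter.Germ (𝓝 (0 : Fin n → ℂ)) ℂ) where
  carrier := {g | ∃ f : (Fin n → ℂ) → ℂ,
    AnalyticAt ℂ f 0 ∧ (f : Filter.Germ (𝓝 (0 : Fin n → ℂ)) ℂ) = g}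
  mul_mem' := by
    rintro a b ⟨f, hf, rfl⟩ ⟨g, hg, rfl⟩
    exact ⟨f * g, hf.mul hg, rfl⟩
  add_mem' := by
    rintro a b ⟨f, hf, rfl⟩ ⟨g, hg, rfl⟩
    exact ⟨f + g, hf.add hg, rfl⟩
  algebraMap_mem' := fun c => ⟨fun _ => c, analyticAt_const, rfl⟩

variable {n : ℕ}

/-- Existence of an analytic representative for an element of `𝒪ₙ`. -/
lemma On.exists_rep (g : On n) : ∃ f : (Fin n → ℂ) → ℂ,
    AnalyticAt ℂ f 0 ∧ (f : Filter.Germ (𝓝 (0 : Fin n → ℂ)) ℂ) = (g : Filter.Germ _ ℂ) :=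
  g.2

/-- A chosen analytic representative of a germ in `𝒪ₙ`. -/
def On.rep (g : On n) : (Fin n → ℂ) → ℂ := (On.exists_rep g).choose

lemma On.rep_analyticAt (g : On n) : AnalyticAt ℂ (On.rep g) 0 :=
  (On.exists_rep g).choose_spec.1

lemma On.rep_spec (g : On n) :
    (On.rep g : Filter.Germ (𝓝 (0 : Fin n → ℂ)) ℂ) = (g : Filter.Germ _ ℂ) :=
  (On.exists_rep g).choose_spec.2

/-- Build an element of `𝒪ₙ` from an analytic function. -/
def mkOn {n : ℕ} (f : (Fin n → ℂ) → ℂ) (hf : AnalyticAt ℂ f 0) : On n :=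
  ⟨(f : Filter.Germ (𝓝 (0 : Fin n → ℂ)) ℂ), ⟨f, hf, rfl⟩⟩

/-- The `i`-th partial derivative, as an operation on `𝒪ₙ`. -/
def pd (i : Fin n) (g : On n) : On n :=
  mkOn (fun x => fderiv ℂ (On.rep g) x (Pi.single i 1)) (by
    have h := ((ContinuousLinearMap.apply ℂ ℂ (Pi.single i 1)).analyticAt
      (fderiv ℂ (On.rep g) 0)).comp (On.rep_analyticAt g).fderiv
    exact h)

/-- Restriction of germs at `0` to germs along a finer filter. -/
def restrictGerm {l : Filter (Fin n → ℂ)} (hl : l ≤ 𝓝 (0 : Fin n → ℂ)) :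
    Filter.Germ (𝓝 (0 : Fin n → ℂ)) ℂ →+* Filter.Germ l ℂ where
  toFun g := g.compTendsto id (Filter.tendsto_id'.2 hl)
  map_one' := rfl
  map_mul' a b := Filter.Germ.inductionOn₂ a b fun f g => rfl
  map_zero' := rfl
  map_add' a b := Filter.Germ.inductionOn₂ a b fun f g => rfl

/-- Evaluation of germs restricted along `l ≤ 𝓝 0`, as a ring homomorphism on `𝒪ₙ`. -/
def restrictOn (n : ℕ) {l : Filter (Fin n → ℂ)} (hl : l ≤ 𝓝 (0 : Fin n → ℂ)) :
    On n →+* Filter.Germ l ℂ :=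
  (restrictGerm hl).comp (On n).val.toRingHom

/-- The ideal `I_X ⊆ 𝒪ₙ` of germs vanishing on a set `X` near `0`. -/
def IX (n : ℕ) (X : Set (Fin n → ℂ)) : Ideal (On n) :=
  RingHom.ker (restrictOn n (nhdsWithin_le_nhds (s := X)))

/-- The maximal ideal `𝔪 ⊂ 𝒪ₙ` of germs vanishing at the origin. -/
def mId (n : ℕ) : Ideal (On n) :=
  RingHom.ker (restrictOn n (pure_le_nhds (0 : Fin n → ℂ)))

/-- `X` is the germ at `0` of an analytic variety: `0 ∈ X` and, near `0`, `X` coincides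
with the common zero locus of finitely many holomorphic functions. -/
def IsAnalyticGermAt0 (n : ℕ) (X : Set (Fin n → ℂ)) : Prop :=
  (0 : Fin n → ℂ) ∈ X ∧
    ∃ (m : ℕ) (g : Fin m → (Fin n → ℂ) → ℂ),
      (∀ j, AnalyticAt ℂ (g j) 0) ∧
      ∀ᶠ x in 𝓝 (0 : Fin n → ℂ), (x ∈ X ↔ ∀ j, g j x = 0)

/-- The action `δ(g) = Σ δᵢ ∂g/∂xᵢ` of a vector field `δ ∈ Θ ≅ 𝒪ₙⁿ` on `g ∈ 𝒪ₙ`. -/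
def applyVF (δ : Fin n → On n) (g : On n) : On n := ∑ i, δ i * pd i g

lemma applyVF_add (a b : Fin n → On n) (g : On n) :
    applyVF (a + b) g = applyVF a g + applyVF b g := by
  simp [applyVF, add_mul, Finset.sum_add_distrib]

lemma applyVF_smul (c : On n) (a : Fin n → On n) (g : On n) :
    applyVF (c • a) g = c * applyVF a g := by
  simp [applyVF, Finset.mul_sum, smul_eq_mul, mul_assoc]

/-- For fixed `f`, the map `δ ↦ δ(f)` as an `𝒪ₙ`-linear map `Θ → 𝒪ₙ`. -/
def gradMap (n : ℕ) (f : On n) : (Fin n → On n) →ₗ[On n] On n where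
  toFun δ := applyVF δ f
  map_add' a b := applyVF_add a b f
  map_smul' c a := applyVF_smul c a f

/-- The module `Θ_X` of logarithmic vector fields of `X`, i.e. vector fields
preserving the ideal `I_X`. -/
def ThetaX (n : ℕ) (X : Set (Fin n → ℂ)) : Submodule (On n) (Fin n → On n) where
  carrier := {δ | ∀ g ∈ IX n X, applyVF δ g ∈ IX n X}
  add_mem' := by
    intro a b ha hb g hg
    rw [applyVF_add]
    exact Ideal.add_mem _ (ha g hg) (hb g hg)
  zero_mem' := by
    intro g hg
    have h0 : applyVF (0 : Fin n → On n) g = 0 := by simp [applyVF]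
    rw [h0]; exact Ideal.zero_mem _
  smul_mem' := by
    intro c a ha g hg
    rw [applyVF_smul]
    exact Ideal.mul_mem_left _ _ (ha g hg)

/-- The module `Θ_Y` of vector fields tangent to the hypersurface `Y = f⁻¹(0)`,
i.e. `δ(f) ∈ ⟨f⟩`. -/
def ThetaF (n : ℕ) (f : On n) : Submodule (On n) (Fin n → On n) :=
  Submodule.comap (gradMap n f) (Ideal.span {f})

/-- The module `H_Y` of Hamiltonian vector fields of `f`, i.e. `δ(f) = 0`. -/
def HamF (n : ℕ) (f : On n) : Submodule (On n) (Fin n → On n) :=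
  LinearMap.ker (gradMap n f)

/-- The Bruce–Roberts ideal `df(Θ_X) ⊆ 𝒪ₙ`. -/
def BRIdeal (n : ℕ) (X : Set (Fin n → ℂ)) (f : On n) : Ideal (On n) :=
  Submodule.map (gradMap n f) (ThetaX n X)

/-- The Jacobian ideal `J(f) = ⟨∂f/∂x₁, …, ∂f/∂xₙ⟩`. -/
def Jac (n : ℕ) (f : On n) : Ideal (On n) :=
  Ideal.span (Set.range fun i => pd i f)

/-- The ideal `J(f,h)` generated by the `2×2` minors of the Jacobian matrix of `(f,h)`. -/
def Jmin (n : ℕ) (f h : On n) : Ideal (On n) :=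
  Ideal.span (Set.range fun p : Fin n × Fin n => pd p.1 f * pd p.2 h - pd p.2 f * pd p.1 h)

/-- The Milnor number `μ(f)`. -/
def mu (n : ℕ) (f : On n) : ℕ := Module.finrank ℂ (On n ⧸ Jac n f)

/-- The Tjurina number `τ(f)`. -/
def tau (n : ℕ) (f : On n) : ℕ :=
  Module.finrank ℂ (On n ⧸ (Jac n f + Ideal.span {f}))

/-- The Bruce–Roberts Milnor number `μ_X(f)`. -/
def muX (n : ℕ) (X : Set (Fin n → ℂ)) (f : On n) : ℕ :=
  Module.finrank ℂ (On n ⧸ BRIdeal n X f)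

/-- The Bruce–Roberts Tjurina number `τ_X(f)`. -/
def tauX (n : ℕ) (X : Set (Fin n → ℂ)) (f : On n) : ℕ :=
  Module.finrank ℂ (On n ⧸ (BRIdeal n X f + Ideal.span {f}))

/-- The value at the origin of a germ in `𝒪ₙ`. -/
def ev0 (g : On n) : ℂ := On.rep g 0

/-- The linear part `j¹δ` of a vector field `δ`, as the matrix `(∂δⱼ/∂xᵢ)(0)`. -/
def linPart (δ : Fin n → On n) : Matrix (Fin n) (Fin n) ℂ :=
  Matrix.of fun i j => ev0 (pd i (δ j))

/-- The eigenvalues (with multiplicities) of the linear part of `δ` are given by `w`. -/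
def EigsEq (δ : Fin n → On n) (w : Fin n → ℚ) : Prop :=
  (linPart δ).charpoly = ∏ i, (Polynomial.X - Polynomial.C ((w i : ℂ)))

/-- The germ at `0` of the coordinate function `xᵢ`. -/
def coordG (i : Fin n) : On n :=
  mkOn (fun x : Fin n → ℂ => x i)
    ((ContinuousLinearMap.proj (R := ℂ) (φ := fun _ : Fin n => ℂ) i).analyticAt _)

/-- `g` is quasihomogeneous of degree `d` with respect to the weights `w` (in the given
coordinates): the Euler identity `Σ wᵢ xᵢ ∂g/∂xᵢ = d g` holds. -/
def IsQH (n : ℕ) (w : Fin n → ℚ) (d : ℚ) (g : On n) : Prop :=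
  ∑ i, (w i : ℂ) • (coordG i * pd i g) = (d : ℂ) • g

/-- A germ of a biholomorphic change of coordinates at `0 ∈ ℂⁿ`. -/
structure CoordChange (n : ℕ) where
  toFun : (Fin n → ℂ) → (Fin n → ℂ)
  invFun : (Fin n → ℂ) → (Fin n → ℂ)
  analyticAt : AnalyticAt ℂ toFun 0
  inv_analyticAt : AnalyticAt ℂ invFun 0
  map_zero : toFun 0 = 0
  inv_map_zero : invFun 0 = 0
  left_inv : ∀ᶠ x in 𝓝 (0 : Fin n → ℂ), invFun (toFun x) = x
  right_inv : ∀ᶠ x in 𝓝 (0 : Fin n → ℂ), toFun (invFun x) = x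

lemma CoordChange.tendsto (φ : CoordChange n) :
    Filter.Tendsto φ.toFun (𝓝 (0 : Fin n → ℂ)) (𝓝 (0 : Fin n → ℂ)) := by
  have h := φ.analyticAt.continuousAt
  rwa [ContinuousAt, φ.map_zero] at h

/-- The pullback (composition) of a germ `g ∈ 𝒪ₙ` under a change of coordinates. -/
def pullback (φ : CoordChange n) (g : On n) : On n :=
  ⟨(g : Filter.Germ (𝓝 (0 : Fin n → ℂ)) ℂ).compTendsto φ.toFun φ.tendsto, by
    refine ⟨On.rep g ∘ φ.toFun, ?_, ?_⟩
    · have h := On.rep_analyticAt g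
      rw [← φ.map_zero] at h
      exact h.comp φ.analyticAt
    · rw [← On.rep_spec g]
      exact (Filter.Germ.coe_compTendsto _ φ.tendsto).symm⟩

/-- Definition 1.1: the pair `(f, X)` is relatively quasihomogeneous with respect to the
weights `w`: in suitable coordinates, `f` is quasihomogeneous of degree `1` and `I_X` admits
a system of quasihomogeneous generators of positive degrees, all with respect to `w`. -/
def RelQH (n : ℕ) (X : Set (Fin n → ℂ)) (f : On n) (w : Fin n → ℚ) : Prop :=
  ∃ φ : CoordChange n,
    IsQH n w 1 (pullback φ f) ∧
    ∃ (m : ℕ) (h : Fin m → On n) (d : Fin m → ℚ),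
      Ideal.span (Set.range h) = IX n X ∧ (∀ j, 0 < d j) ∧
      ∀ j, IsQH n w (d j) (pullback φ (h j))

/-- The variety `X` is quasihomogeneous with respect to the weights `w`: in suitable
coordinates, `I_X` admits a system of quasihomogeneous generators of positive degrees. -/
def VarQH (n : ℕ) (X : Set (Fin n → ℂ)) (w : Fin n → ℚ) : Prop :=
  ∃ φ : CoordChange n,
    ∃ (m : ℕ) (h : Fin m → On n) (d : Fin m → ℚ),
      Ideal.span (Set.range h) = IX n X ∧ (∀ j, 0 < d j) ∧
      ∀ j, IsQH n w (d j) (pullback φ (h j))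

instance (f : On n) : HasQuotient (↥(ThetaF n f)) (Submodule ↥(On n) ↥(ThetaF n f)) :=
  Submodule.hasQuotient (R := On n) (M := ThetaF n f)

section ParamIntegral

open MeasureTheory NNReal ENNReal

lemma param_local {W : Type*} [NormedAddCommGroup W] [NormedSpace ℂ W]
    {g : W → ℂ} {γ : ℝ → W} (hγ : Continuous γ) {t0 : ℝ} (hg : AnalyticAt ℂ g (γ t0)) :
    ∃ ε > 0, ∀ a b : ℝ, |a - t0| < ε → |b - t0| < ε →
      AnalyticAt ℂ (fun y => ∫ t in a..b, g (γ t + y)) 0 := by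
  obtain ⟨p, r, hp⟩ := hg
  obtain ⟨ρ, hρ0, hρ⟩ : ∃ ρ : ℝ≥0, 0 < ρ ∧ (ρ + ρ : ℝ≥0∞) < r := by
    have h2 : (0 : ℝ≥0∞) < r / 2 := ENNReal.half_pos hp.r_pos.ne'
    obtain ⟨ρ, h0, h1⟩ := ENNReal.lt_iff_exists_nnreal_btwn.1 h2
    refine ⟨ρ, by exact_mod_cast h0, ?_⟩
    calc (ρ + ρ : ℝ≥0∞) < r / 2 + r / 2 := ENNReal.add_lt_add h1 h1
      _ = r := ENNReal.add_halves r
  have hρr : (ρ : ℝ≥0∞) < r := lt_of_le_of_lt le_self_add hρ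
  have hρp : (ρ : ℝ≥0∞) < p.radius := lt_of_lt_of_le hρr hp.r_le
  obtain ⟨ε, hε, hball⟩ := Metric.continuousAt_iff.1 hγ.continuousAt ρ (by exact_mod_cast hρ0)
  refine ⟨ε, hε, fun a b ha hb => ?_⟩
  have hnear : ∀ t ∈ Set.uIcc a b, ‖γ t - γ t0‖₊ < ρ := by
    intro t ht
    have : |t - t0| < ε := by
      rw [Set.mem_uIcc] at ht
      rw [abs_lt] at *
      rcases ht with h | h <;> constructor <;> linarith [h.1, h.2]
    have h2 := hball (x := t) (by rwa [Real.dist_eq])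
    rw [dist_eq_norm] at h2
    exact_mod_cast h2
  let B : ℕ → ℝ≥0 := fun k =>
    ∑' s : Σ l : ℕ, { s : Finset (Fin (k + l)) // s.card = l }, ‖p (k + s.1)‖₊ * ρ ^ s.1
  have hB : Summable fun k => B k * ρ ^ k := by
    simpa only [B, ← NNReal.tsum_mul_right] using
      (NNReal.summable_sigma.1 (p.changeOriginSeries_summable_aux₁ (hρ.trans_le hp.r_le))).2
  have hcB : ∀ k, ∀ t ∈ Set.uIcc a b, ‖p.changeOrigin (γ t - γ t0) k‖₊ ≤ B k := by
    intro k t ht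
    have h1 : (‖γ t - γ t0‖₊ : ℝ≥0∞) < p.radius :=
      lt_trans (by exact_mod_cast hnear t ht) hρp
    refine (p.nnnorm_changeOrigin_le k h1).trans ?_
    refine Summable.tsum_le_tsum (fun s => ?_) (p.changeOriginSeries_summable_aux₂ h1 k)
      (p.changeOriginSeries_summable_aux₂ hρp k)
    gcongr
    exact (hnear t ht).le
  have hcont : ∀ k, ContinuousOn (fun t => p.changeOrigin (γ t - γ t0) k) (Set.uIcc a b) := by
    intro k
    have h1 := (p.hasFPowerSeriesOnBall_changeOrigin k (lt_of_le_of_lt zero_le hρp)).continuousOn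
    refine h1.comp (by fun_prop) (fun t ht => ?_)
    rw [mem_eball_zero_iff]
    exact lt_trans (by exact_mod_cast hnear t ht) hρp
  have hIntv : ∀ k, IntervalIntegrable (fun t => p.changeOrigin (γ t - γ t0) k) volume a b :=
    fun k => (hcont k).intervalIntegrable
  let q : FormalMultilinearSeries ℂ W ℂ := fun k => ∫ t in a..b, p.changeOrigin (γ t - γ t0) k
  have hq : HasFPowerSeriesOnBall (fun y => ∫ t in a..b, g (γ t + y)) q 0 ρ := by
    refine ⟨?_, by exact_mod_cast hρ0, ?_⟩
    · refine q.le_radius_of_bound ((∑' k, B k * ρ ^ k : ℝ≥0) * |b - a|) (fun k => ?_)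
      have h1 : ‖q k‖ ≤ B k * |b - a| := by
        refine intervalIntegral.norm_integral_le_of_norm_le_const (fun t ht => ?_)
        exact_mod_cast hcB k t (Set.uIoc_subset_uIcc ht)
      have h2 : B k * ρ ^ k ≤ ∑' k, B k * ρ ^ k := hB.le_tsum k (fun _ _ => zero_le)
      have h2' : (B k : ℝ) * (ρ:ℝ) ^ k ≤ ((∑' k, B k * ρ ^ k : ℝ≥0) : ℝ) := by exact_mod_cast h2
      calc ‖q k‖ * (ρ:ℝ) ^ k ≤ (B k * |b - a|) * (ρ:ℝ)^k := by gcongr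
        _ = (B k * (ρ:ℝ)^k) * |b - a| := by ring
        _ ≤ _ := by gcongr
    · intro y hy
      rw [zero_add]
      have hy' : ‖y‖₊ < ρ := by
        rw [mem_eball_zero_iff] at hy
        exact_mod_cast hy
      have key : HasSum (fun k => ∫ t in a..b, (p.changeOrigin (γ t - γ t0) k) (fun _ => y))
          (∫ t in a..b, g (γ t + y)) := by
        refine intervalIntegral.hasSum_integral_of_dominated_convergence
          (fun k _ => ((B k * ρ ^ k : ℝ≥0) : ℝ)) ?_ ?_ ?_ ?_ ?_
        · intro k
          have h3 : ContinuousOn (fun t => (p.changeOrigin (γ t - γ t0) k) (fun _ => y))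
              (Set.uIcc a b) :=
            (ContinuousMultilinearMap.apply ℂ (fun _ : Fin k => W) ℂ
              (fun _ => y)).continuous.comp_continuousOn (hcont k)
          exact (h3.mono Set.uIoc_subset_uIcc).aestronglyMeasurable measurableSet_uIoc
        · intro k
          refine ae_of_all _ (fun t ht => ?_)
          refine ((p.changeOrigin (γ t - γ t0) k).le_opNorm _).trans ?_
          rw [Finset.prod_const, Finset.card_univ, Fintype.card_fin]
          push_cast
          have := hcB k t (Set.uIoc_subset_uIcc ht)
          have h4 : ‖y‖ ≤ ρ := by exact_mod_cast hy'.le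
          gcongr
          exact_mod_cast this
        · exact ae_of_all _ (fun t _ => by exact_mod_cast hB)
        · exact intervalIntegrable_const
        · refine ae_of_all _ (fun t ht => ?_)
          have h5 := hnear t (Set.uIoc_subset_uIcc ht)
          have h6 := hp.changeOrigin (y := γ t - γ t0)
            (lt_trans (by exact_mod_cast h5) hρr)
          have h7 := h6.hasSum (y := y) (by
            rw [mem_eball_zero_iff, lt_tsub_iff_right]
            refine lt_of_le_of_lt ?_ hρ
            gcongr
            · exact_mod_cast hy'.le
            )
          simpa using h7
      have e : (fun k => q k (fun _ => y)) =
          fun k => ∫ t in a..b, (p.changeOrigin (γ t - γ t0) k) (fun _ => y) := by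
        funext k
        exact (ContinuousLinearMap.intervalIntegral_comp_comm
          (ContinuousMultilinearMap.apply ℂ (fun _ : Fin k => W) ℂ (fun _ => y)) (hIntv k)).symm
      have key2 : HasSum (fun k => q k (fun _ => y)) (∫ t in a..b, g (γ t + y)) := by
        rw [e]; exact key
      exact key2
  exact hq.analyticAt

/-- Analyticity of parameter integrals. -/
lemma param_integral {W : Type*} [NormedAddCommGroup W] [NormedSpace ℂ W]
    {g : W → ℂ} {γ : ℝ → W} (hγ : Continuous γ) {a b : ℝ} (hab : a ≤ b)
    (hg : ∀ t ∈ Set.Icc a b, AnalyticAt ℂ g (γ t)) :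
    AnalyticAt ℂ (fun y => ∫ t in a..b, g (γ t + y)) 0 := by
  choose! ε hε h using fun t (ht : t ∈ Set.Icc a b) => param_local hγ (hg t ht)
  obtain ⟨t, ht0, hmono, ⟨m, hm⟩, hsub⟩ := exists_monotone_Icc_subset_open_cover_Icc hab
    (c := fun i : Set.Icc a b => {s : Set.Icc a b | |(s : ℝ) - i| < ε i})
    (fun i => isOpen_lt (by fun_prop) continuous_const)
    (fun i _ => Set.mem_iUnion.2 ⟨i, by simpa using hε i i.2⟩)
  have hA : AnalyticAt ℂ (fun y => ∑ k ∈ Finset.range m,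
      ∫ s in (t k : ℝ)..(t (k+1) : ℝ), g (γ s + y)) 0 := by
    refine Finset.analyticAt_fun_sum _ (fun k _ => ?_)
    obtain ⟨i, hi⟩ := hsub k
    exact h i i.2 _ _ (hi ⟨le_rfl, hmono (Nat.le_succ k)⟩) (hi ⟨hmono (Nat.le_succ k), le_rfl⟩)
  refine hA.congr ?_
  have hev : ∀ᶠ y in 𝓝 (0 : W), ∀ s ∈ Set.Icc a b, AnalyticAt ℂ g (γ s + y) := by
    refine isCompact_Icc.eventually_forall_of_forall_eventually (fun s hs => ?_)
    have h1 : Tendsto (fun z : W × ℝ => γ z.2 + z.1) (𝓝 (0, s)) (𝓝 (γ s)) := by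
      have : Continuous (fun z : W × ℝ => γ z.2 + z.1) := by fun_prop
      simpa using this.tendsto (0, s)
    exact h1.eventually (hg s hs).eventually_analyticAt
  filter_upwards [hev] with y hy
  have hco : ContinuousOn (fun s => g (γ s + y)) (Set.Icc a b) := by
    intro s hs
    have h1 : ContinuousAt (fun s => γ s + y) s := by fun_prop
    exact (ContinuousAt.comp (f := fun s => γ s + y) (hy s hs).continuousAt h1).continuousWithinAt
  rw [intervalIntegral.sum_integral_adjacent_intervals (a := fun k => (t k : ℝ))
    (f := fun s => g (γ s + y)), ht0, hm m le_rfl]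
  intro k _
  refine (hco.mono ?_).intervalIntegrable
  rw [Set.uIcc_of_le (by exact_mod_cast hmono (Nat.le_succ k))]
  exact Set.Icc_subset_Icc (t k).2.1 (t (k+1)).2.2

end ParamIntegral

section Basics

lemma mkOn_eq_iff {F G : (Fin n → ℂ) → ℂ} {hF : AnalyticAt ℂ F 0} {hG : AnalyticAt ℂ G 0} :
    mkOn F hF = mkOn G hG ↔ F =ᶠ[𝓝 0] G := by
  rw [← Filter.Germ.coe_eq]
  exact Subtype.ext_iff

lemma mkOn_rep (g : On n) : mkOn (On.rep g) (On.rep_analyticAt g) = g :=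
  Subtype.ext (On.rep_spec g)

lemma exists_mkOn (g : On n) : ∃ F, ∃ hF : AnalyticAt ℂ F 0, g = mkOn F hF :=
  ⟨_, _, (mkOn_rep g).symm⟩

lemma rep_mkOn (F : (Fin n → ℂ) → ℂ) (hF : AnalyticAt ℂ F 0) :
    On.rep (mkOn F hF) =ᶠ[𝓝 0] F := by
  have := mkOn_rep (mkOn F hF)
  rwa [mkOn_eq_iff] at this

lemma mkOn_add {F G : (Fin n → ℂ) → ℂ} (hF : AnalyticAt ℂ F 0) (hG : AnalyticAt ℂ G 0) :
    mkOn F hF + mkOn G hG = mkOn (fun x => F x + G x) (hF.add hG) := rfl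

lemma mkOn_mul {F G : (Fin n → ℂ) → ℂ} (hF : AnalyticAt ℂ F 0) (hG : AnalyticAt ℂ G 0) :
    mkOn F hF * mkOn G hG = mkOn (fun x => F x * G x) (hF.mul hG) := rfl

lemma mkOn_sub {F G : (Fin n → ℂ) → ℂ} (hF : AnalyticAt ℂ F 0) (hG : AnalyticAt ℂ G 0) :
    mkOn F hF - mkOn G hG = mkOn (fun x => F x - G x) (hF.sub hG) := rfl

lemma algebraMap_On (c : ℂ) : algebraMap ℂ (On n) c = mkOn (fun _ => c) analyticAt_const := rfl

lemma zero_On : (0 : On n) = mkOn (fun _ => 0) analyticAt_const := rfl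
lemma one_On : (1 : On n) = mkOn (fun _ => 1) analyticAt_const := rfl

lemma pd_aux (i : Fin n) {F : (Fin n → ℂ) → ℂ} (hF : AnalyticAt ℂ F 0) :
    AnalyticAt ℂ (fun x => fderiv ℂ F x (Pi.single i 1)) 0 := by
  have h := ((ContinuousLinearMap.apply ℂ ℂ (Pi.single i 1)).analyticAt
      (fderiv ℂ F 0)).comp hF.fderiv
  exact h

lemma pd_mkOn (i : Fin n) {F : (Fin n → ℂ) → ℂ} (hF : AnalyticAt ℂ F 0) :
    pd i (mkOn F hF) = mkOn (fun x => fderiv ℂ F x (Pi.single i 1)) (pd_aux i hF) := by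
  refine mkOn_eq_iff.2 ?_
  filter_upwards [(rep_mkOn F hF).fderiv (𝕜 := ℂ)] with x hx
  rw [hx]

lemma pd_add (i : Fin n) (a b : On n) : pd i (a + b) = pd i a + pd i b := by
  obtain ⟨F, hF, rfl⟩ := exists_mkOn a
  obtain ⟨G, hG, rfl⟩ := exists_mkOn b
  rw [mkOn_add, pd_mkOn, pd_mkOn, pd_mkOn, mkOn_add, mkOn_eq_iff]
  filter_upwards [hF.eventually_analyticAt, hG.eventually_analyticAt] with x h1 h2
  rw [fderiv_fun_add h1.differentiableAt h2.differentiableAt]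
  rfl

lemma pd_mul (i : Fin n) (a b : On n) : pd i (a * b) = a * pd i b + b * pd i a := by
  obtain ⟨F, hF, rfl⟩ := exists_mkOn a
  obtain ⟨G, hG, rfl⟩ := exists_mkOn b
  rw [mkOn_mul, pd_mkOn, pd_mkOn, pd_mkOn, mkOn_mul, mkOn_mul, mkOn_add, mkOn_eq_iff]
  filter_upwards [hF.eventually_analyticAt, hG.eventually_analyticAt] with x h1 h2
  rw [fderiv_fun_mul h1.differentiableAt h2.differentiableAt]
  rfl

lemma pd_algebraMap (i : Fin n) (c : ℂ) : pd i (algebraMap ℂ (On n) c) = 0 := by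
  rw [algebraMap_On, pd_mkOn, zero_On, mkOn_eq_iff]
  filter_upwards with x
  simp

/-- The partial derivative as a derivation. -/
def pdD (i : Fin n) : Derivation ℂ (On n) (On n) where
  toFun := pd i
  map_add' := pd_add i
  map_smul' := by
    intro c a
    rw [Algebra.smul_def, pd_mul, pd_algebraMap]
    simp [Algebra.smul_def]
  map_one_eq_zero' := by
    have := pd_algebraMap i (1 : ℂ)
    rw [map_one] at this
    exact this
  leibniz' := by
    intro a b
    exact pd_mul i a b

lemma pdD_apply (i : Fin n) (g : On n) : pdD i g = pd i g := rfl

lemma coord_an (i : Fin n) (p : Fin n → ℂ) : AnalyticAt ℂ (fun x : Fin n → ℂ => x i) p :=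
  (ContinuousLinearMap.proj (R := ℂ) (φ := fun _ : Fin n => ℂ) i).analyticAt p

lemma coordG_eq (i : Fin n) : coordG i = mkOn (fun x : Fin n → ℂ => x i) (coord_an i 0) := rfl

lemma pd_coordG (i j : Fin n) : pd i (coordG j) = if i = j then 1 else 0 := by
  rw [coordG_eq, pd_mkOn]
  have : ∀ c : ℂ, (mkOn (fun _ => c) analyticAt_const : On n) = algebraMap ℂ (On n) c := fun c => rfl
  have h2 : mkOn (fun x => fderiv ℂ (fun x : Fin n → ℂ => x j) x (Pi.single i 1))
      (pd_aux i (coord_an j 0)) =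
      (mkOn (fun _ => if i = j then 1 else 0) analyticAt_const : On n) := by
    rw [mkOn_eq_iff]
    filter_upwards with x
    have := (ContinuousLinearMap.proj (R := ℂ) (φ := fun _ : Fin n => ℂ) j).fderiv (x := x)
    have h3 : fderiv ℂ (fun x : Fin n → ℂ => x j) x = ContinuousLinearMap.proj j := this
    rw [h3]
    simp [Pi.single_apply, eq_comm]
  rw [h2, this]
  split_ifs <;> simp

lemma pd_comm (i j : Fin n) (g : On n) : pd i (pd j g) = pd j (pd i g) := by
  obtain ⟨F, hF, rfl⟩ := exists_mkOn g
  rw [pd_mkOn, pd_mkOn, pd_mkOn, pd_mkOn, mkOn_eq_iff]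
  filter_upwards [hF.eventually_analyticAt] with x h1
  have hs : IsSymmSndFDerivAt ℂ F x := by
    refine ContDiffAt.isSymmSndFDerivAt (n := ⊤) (h1.contDiffAt) ?_
    simp
  have hd : DifferentiableAt ℂ (fderiv ℂ F) x := h1.fderiv.differentiableAt
  have e : ∀ v : Fin n → ℂ, fderiv ℂ (fun x => fderiv ℂ F x v) x = (fderiv ℂ (fderiv ℂ F) x).flip v := by
    intro v
    rw [fderiv_clm_apply hd (by fun_prop)]
    simp
  rw [e, e]
  exact hs _ _

/-- Evaluation at zero as ring hom. -/
lemma ev0_mkOn {F : (Fin n → ℂ) → ℂ} (hF : AnalyticAt ℂ F 0) : ev0 (mkOn F hF) = F 0 :=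
  (rep_mkOn F hF).self_of_nhds

def evH : On n →ₐ[ℂ] ℂ where
  toFun := ev0
  map_one' := by rw [one_On, ev0_mkOn]
  map_zero' := by rw [zero_On, ev0_mkOn]
  map_mul' a b := by
    obtain ⟨F, hF, rfl⟩ := exists_mkOn a
    obtain ⟨G, hG, rfl⟩ := exists_mkOn b
    rw [mkOn_mul, ev0_mkOn, ev0_mkOn, ev0_mkOn]
  map_add' a b := by
    obtain ⟨F, hF, rfl⟩ := exists_mkOn a
    obtain ⟨G, hG, rfl⟩ := exists_mkOn b
    rw [mkOn_add, ev0_mkOn, ev0_mkOn, ev0_mkOn]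
  commutes' c := by rw [algebraMap_On, ev0_mkOn]; rfl

lemma evH_mkOn {F : (Fin n → ℂ) → ℂ} (hF : AnalyticAt ℂ F 0) : evH (mkOn F hF) = F 0 :=
  ev0_mkOn hF

lemma evH_eq (g : On n) : evH g = ev0 g := rfl

lemma mem_mId {g : On n} : g ∈ mId n ↔ evH g = 0 := by
  obtain ⟨F, hF, rfl⟩ := exists_mkOn g
  rw [evH_mkOn, mId, RingHom.mem_ker]
  have : restrictOn n (pure_le_nhds (0 : Fin n → ℂ)) (mkOn F hF) = 
    ((F : Filter.Germ (pure (0 : Fin n → ℂ)) ℂ)) := rfl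
  rw [this]
  have h0 : (0 : Filter.Germ (pure (0 : Fin n → ℂ)) ℂ) = (((fun _ => 0) : (Fin n → ℂ) → ℂ) : Filter.Germ (pure (0 : Fin n → ℂ)) ℂ) := rfl
  rw [h0, Filter.Germ.coe_eq]
  simp [Filter.EventuallyEq]

lemma mem_IX {X : Set (Fin n → ℂ)} {F : (Fin n → ℂ) → ℂ} {hF : AnalyticAt ℂ F 0} :
    mkOn F hF ∈ IX n X ↔ ∀ᶠ x in 𝓝 0, x ∈ X → F x = 0 := by
  rw [IX, RingHom.mem_ker]
  have : restrictOn n (nhdsWithin_le_nhds (s := X)) (mkOn F hF) = 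
    ((F : Filter.Germ (𝓝[X] (0 : Fin n → ℂ)) ℂ)) := rfl
  rw [this]
  have h0 : (0 : Filter.Germ (𝓝[X] (0 : Fin n → ℂ)) ℂ) = (((fun _ => 0) : (Fin n → ℂ) → ℂ) : Filter.Germ (𝓝[X] (0 : Fin n → ℂ)) ℂ) := rfl
  rw [h0, Filter.Germ.coe_eq, Filter.EventuallyEq, eventually_nhdsWithin_iff]

lemma isUnit_On {g : On n} (h : evH g ≠ 0) : IsUnit g := by
  obtain ⟨F, hF, rfl⟩ := exists_mkOn g
  rw [evH_mkOn] at h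
  refine IsUnit.of_mul_eq_one (mkOn (fun x => (F x)⁻¹) (hF.fun_inv h)) ?_
  rw [mkOn_mul, one_On, mkOn_eq_iff]
  filter_upwards [hF.continuousAt.eventually_ne h] with x hx
  exact mul_inv_cancel₀ hx

lemma isUnit_On' {g : On n} (h : g ∉ mId n) : IsUnit g := isUnit_On (by rwa [mem_mId] at h)

lemma mId_ne_top : mId n ≠ ⊤ := by
  intro h
  have : (1 : On n) ∈ mId n := h ▸ Submodule.mem_top
  rw [mem_mId] at this
  simp at this

instance nontrivial_On : Nontrivial (On n) := by
  refine ⟨0, 1, fun h => ?_⟩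
  have := congrArg evH h
  simp at this

lemma le_mId_of_ne_top {I : Ideal (On n)} (h : I ≠ ⊤) : I ≤ mId n := by
  intro g hg
  by_contra h1
  exact h (Ideal.eq_top_of_isUnit_mem _ hg (isUnit_On' h1))

lemma comp_aux {k : ℕ} {φ : (Fin k → ℂ) → (Fin n → ℂ)} (hφ : AnalyticAt ℂ φ 0) (h0 : φ 0 = 0)
    {F : (Fin n → ℂ) → ℂ} (hF : AnalyticAt ℂ F 0) : AnalyticAt ℂ (fun x => F (φ x)) 0 := by
  rw [← h0] at hF; exact hF.comp hφ

/-- Substitution. -/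
def compOn {k : ℕ} (φ : (Fin k → ℂ) → (Fin n → ℂ)) (hφ : AnalyticAt ℂ φ 0) (h0 : φ 0 = 0) :
    On n →ₐ[ℂ] On k where
  toFun g := mkOn (fun x => On.rep g (φ x)) (comp_aux hφ h0 (On.rep_analyticAt g))
  map_one' := by
    rw [one_On, one_On, mkOn_eq_iff]
    have ht : Tendsto φ (𝓝 0) (𝓝 0) := by simpa [ContinuousAt, h0] using hφ.continuousAt
    exact ht.eventually (rep_mkOn (fun _ => (1:ℂ)) analyticAt_const)
  map_zero' := by
    rw [zero_On, zero_On, mkOn_eq_iff]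
    have ht : Tendsto φ (𝓝 0) (𝓝 0) := by simpa [ContinuousAt, h0] using hφ.continuousAt
    exact ht.eventually (rep_mkOn (fun _ => (0:ℂ)) analyticAt_const)
  map_mul' a b := by
    obtain ⟨F, hF, rfl⟩ := exists_mkOn a
    obtain ⟨G, hG, rfl⟩ := exists_mkOn b
    have ht : Tendsto φ (𝓝 0) (𝓝 0) := by simpa [ContinuousAt, h0] using hφ.continuousAt
    rw [mkOn_mul, mkOn_mul, mkOn_eq_iff]
    filter_upwards [ht.eventually (rep_mkOn _ hF), ht.eventually (rep_mkOn _ hG),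
      ht.eventually (rep_mkOn _ (hF.mul hG))] with x h1 h2 h3
    rw [h1, h2]
    exact h3
  map_add' a b := by
    obtain ⟨F, hF, rfl⟩ := exists_mkOn a
    obtain ⟨G, hG, rfl⟩ := exists_mkOn b
    have ht : Tendsto φ (𝓝 0) (𝓝 0) := by simpa [ContinuousAt, h0] using hφ.continuousAt
    rw [mkOn_add, mkOn_add, mkOn_eq_iff]
    filter_upwards [ht.eventually (rep_mkOn _ hF), ht.eventually (rep_mkOn _ hG),
      ht.eventually (rep_mkOn _ (hF.add hG))] with x h1 h2 h3
    rw [h1, h2]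
    exact h3
  commutes' c := by
    rw [algebraMap_On, algebraMap_On, mkOn_eq_iff]
    have ht : Tendsto φ (𝓝 0) (𝓝 0) := by simpa [ContinuousAt, h0] using hφ.continuousAt
    exact ht.eventually (rep_mkOn (fun _ => c) analyticAt_const)

lemma compOn_mkOn {k : ℕ} (φ : (Fin k → ℂ) → (Fin n → ℂ)) (hφ : AnalyticAt ℂ φ 0) (h0 : φ 0 = 0)
    {F : (Fin n → ℂ) → ℂ} (hF : AnalyticAt ℂ F 0) :
    compOn φ hφ h0 (mkOn F hF) = mkOn (fun x => F (φ x)) (comp_aux hφ h0 hF) := by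
  have ht : Tendsto φ (𝓝 0) (𝓝 0) := by simpa [ContinuousAt, h0] using hφ.continuousAt
  refine (mkOn_eq_iff (hF := comp_aux hφ h0 (On.rep_analyticAt _))).2 ?_
  exact ht.eventually (rep_mkOn _ hF)

end Basics

section Division

/-- The projection killing the `i`-th coordinate. -/
def killMap (i : Fin n) (x : Fin n → ℂ) : Fin n → ℂ := x - x i • Pi.single i (1 : ℂ)

lemma killMap_same (i : Fin n) (x : Fin n → ℂ) : killMap i x i = 0 := by simp [killMap]

lemma killMap_ne {i j : Fin n} (h : j ≠ i) (x : Fin n → ℂ) : killMap i x j = x j := by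
  simp [killMap, h]

lemma division_at {G : (Fin n → ℂ) → ℂ} {p : Fin n → ℂ} (i : Fin n) (hp : p i = 0)
    (hG : AnalyticAt ℂ G p) :
    ∃ Q : (Fin n → ℂ) → ℂ, AnalyticAt ℂ Q p ∧
      ∀ᶠ x in 𝓝 p, G x - G (killMap i x) = x i * Q x := by
  let L : (Fin n → ℂ) × ℂ → (Fin n → ℂ) := fun z => z.1 + ((z.2 - 1) * z.1 i) • Pi.single i (1 : ℂ)
  let g : (Fin n → ℂ) × ℂ → ℂ := fun z => fderiv ℂ G (L z) (Pi.single i 1)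
  have hLa : ∀ z, AnalyticAt ℂ L z := by
    intro z
    have h1 : AnalyticAt ℂ (fun z : (Fin n → ℂ) × ℂ => z.1 i) z :=
      ((ContinuousLinearMap.proj (R := ℂ) (φ := fun _ : Fin n => ℂ) i).comp
        (ContinuousLinearMap.fst ℂ (Fin n → ℂ) ℂ)).analyticAt z
    exact analyticAt_fst.add (((analyticAt_snd.sub analyticAt_const).mul h1).smul analyticAt_const)
  have hLp : ∀ s : ℂ, L (p, s) = p := by
    intro s; simp [L, hp]
  have hga : ∀ s : ℂ, AnalyticAt ℂ g (p, s) := by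
    intro s
    have h1 : AnalyticAt ℂ (fun x => fderiv ℂ G x (Pi.single i 1)) (L (p, s)) := by
      rw [hLp]
      exact ((ContinuousLinearMap.apply ℂ ℂ (Pi.single i 1)).analyticAt
        (fderiv ℂ G p)).comp hG.fderiv
    exact h1.comp (hLa _)
  have hI := param_integral (g := g) (γ := fun t : ℝ => (p, (t : ℂ))) (by fun_prop)
    (zero_le_one : (0:ℝ) ≤ 1) (fun t _ => hga t)
  have hcomp : AnalyticAt ℂ (fun x : Fin n → ℂ => ((x - p, 0) : (Fin n → ℂ) × ℂ)) p :=
    (analyticAt_id.sub analyticAt_const).prod analyticAt_const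
  have hI' : AnalyticAt ℂ (fun x : Fin n → ℂ => ∫ t in (0:ℝ)..1, g ((p, (t:ℂ)) + (x - p, 0))) p := by
    have h0 : ((p - p, 0) : (Fin n → ℂ) × ℂ) = 0 := by simp
    have hI2 : AnalyticAt ℂ (fun y => ∫ t in (0:ℝ)..1, g ((p, (t:ℂ)) + y)) (p - p, 0) := by
      rw [h0]; exact hI
    exact AnalyticAt.comp (f := fun x : Fin n → ℂ => ((x - p, 0) : (Fin n → ℂ) × ℂ)) hI2 hcomp
  refine ⟨_, hI', ?_⟩
  obtain ⟨r, hr, hball⟩ := Metric.eventually_nhds_iff_ball.1 hG.eventually_analyticAt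
  filter_upwards [Metric.ball_mem_nhds p hr] with x hx
  have hseg : ∀ t ∈ Set.Icc (0:ℝ) 1, L (x, (t:ℂ)) ∈ Metric.ball p r := by
    intro t ht
    rw [Metric.mem_ball, dist_pi_lt_iff hr]
    rw [Metric.mem_ball, dist_pi_lt_iff hr] at hx
    intro j
    by_cases hj : j = i
    · subst hj
      have h1 := hx j
      have h2 : L (x, (t:ℂ)) j = t * x j := by simp [L]; ring
      rw [h2, hp]
      rw [hp, dist_zero_right] at h1
      rw [dist_zero_right, norm_mul, Complex.norm_real, Real.norm_of_nonneg ht.1]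
      have := mul_le_of_le_one_left (norm_nonneg (x j)) ht.2
      linarith
    · have h2 : L (x, (t:ℂ)) j = x j := by simp [L, hj]
      rw [h2]; exact hx j
  have hder : ∀ t ∈ Set.uIcc (0:ℝ) 1, HasDerivAt (fun t : ℝ => G (L (x, (t:ℂ))))
      (x i * g (x, (t:ℂ))) t := by
    intro t ht
    rw [Set.uIcc_of_le zero_le_one] at ht
    have h1 := (hball _ (hseg t ht)).differentiableAt.hasFDerivAt
    have h2 : HasDerivAt (fun t : ℝ => L (x, (t:ℂ))) (x i • Pi.single i (1:ℂ)) t := by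
      have h3 : HasDerivAt (fun t : ℝ => ((t:ℂ) - 1) * x i) (x i) t := by
        have := ((Complex.ofRealCLM.hasDerivAt (x := t)).sub_const (1:ℂ)).mul_const (x i)
        simpa using this
      exact (h3.smul_const (Pi.single i (1:ℂ))).const_add x
    have h4 := (h1.restrictScalars ℝ).comp_hasDerivAt t h2
    have e : x i * g (x, (t:ℂ)) =
        ((fderiv ℂ G (L (x, (t:ℂ)))).restrictScalars ℝ) (x i • Pi.single i (1:ℂ)) := by
      rw [ContinuousLinearMap.coe_restrictScalars', map_smul, smul_eq_mul]
    rw [e]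
    exact h4
  have hgc : ContinuousOn (fun t : ℝ => g (x, (t:ℂ))) (Set.uIcc 0 1) := by
    intro t ht
    rw [Set.uIcc_of_le zero_le_one] at ht
    have h1 : ContinuousAt (fun x => fderiv ℂ G x (Pi.single i 1)) (L (x, (t:ℂ))) :=
      (hball _ (hseg t ht)).fderiv.continuousAt.clm_apply continuousAt_const
    have h2 : ContinuousAt (fun t : ℝ => L (x, (t:ℂ))) t := by
      have h3 : ContinuousAt (fun t : ℝ => ((x, (t:ℂ)) : (Fin n → ℂ) × ℂ)) t := by fun_prop
      exact ContinuousAt.comp (f := fun t : ℝ => ((x, (t:ℂ)) : (Fin n → ℂ) × ℂ)) (hLa _).continuousAt h3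
    exact (ContinuousAt.comp (f := fun t : ℝ => L (x, (t:ℂ))) h1 h2).continuousWithinAt
  have hFTC := intervalIntegral.integral_eq_sub_of_hasDerivAt hder
    (by exact (continuousOn_const.mul hgc).intervalIntegrable)
  rw [intervalIntegral.integral_const_mul] at hFTC
  have e1 : L (x, ((1:ℝ):ℂ)) = x := by simp [L]
  have e0 : L (x, ((0:ℝ):ℂ)) = killMap i x := by simp [L, killMap]; abel
  rw [e1, e0] at hFTC
  rw [← hFTC]
  congr 1
  refine intervalIntegral.integral_congr (fun t _ => ?_)
  simp

lemma killMap_analytic (i : Fin n) (p : Fin n → ℂ) : AnalyticAt ℂ (killMap i) p := by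
  have h1 : AnalyticAt ℂ (fun z : (Fin n → ℂ) => z i) p :=
      (ContinuousLinearMap.proj (R := ℂ) (φ := fun _ : Fin n => ℂ) i).analyticAt p
  exact analyticAt_id.sub (h1.smul analyticAt_const)

/-- Setting `x_i = 0`. -/
def sg (i : Fin n) : On n →ₐ[ℂ] On n :=
  compOn (killMap i) (killMap_analytic i 0) (by simp [killMap])

lemma sg_sub_mem (i : Fin n) (g : On n) : ∃ q, g - sg i g = coordG i * q := by
  obtain ⟨F, hF, rfl⟩ := exists_mkOn g
  obtain ⟨Q, hQ, h⟩ := division_at i (by simp) hF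
  refine ⟨mkOn Q hQ, ?_⟩
  rw [sg, compOn_mkOn, mkOn_sub, coordG_eq, mkOn_mul, mkOn_eq_iff]
  exact h

lemma sg_coord_same (i : Fin n) : sg i (coordG i) = 0 := by
  rw [sg, coordG_eq, compOn_mkOn, zero_On, mkOn_eq_iff]
  filter_upwards with x
  exact killMap_same i x

lemma sg_coord_ne {i j : Fin n} (h : j ≠ i) : sg i (coordG j) = coordG j := by
  rw [sg, coordG_eq, compOn_mkOn, mkOn_eq_iff]
  filter_upwards with x
  exact killMap_ne h x

lemma coordG_regular (i : Fin n) {g : On n} (h : coordG i * g = 0) : g = 0 := by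
  obtain ⟨F, hF, rfl⟩ := exists_mkOn g
  rw [coordG_eq, mkOn_mul, zero_On, mkOn_eq_iff] at h
  rw [zero_On, mkOn_eq_iff]
  obtain ⟨r, hr, hball⟩ := Metric.eventually_nhds_iff_ball.1 (h.and hF.eventually_analyticAt)
  filter_upwards [Metric.ball_mem_nhds 0 hr] with x hx
  by_cases hxi : x i = 0
  · -- limit argument
    have hline : Tendsto (fun s : ℂ => x + s • Pi.single i (1:ℂ)) (𝓝 0) (𝓝 x) := by
      have : Continuous (fun s : ℂ => x + s • Pi.single i (1:ℂ)) := by fun_prop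
      simpa using this.tendsto 0
    have h1 : Tendsto (fun s : ℂ => F (x + s • Pi.single i (1:ℂ))) (𝓝[≠] 0) (𝓝 (F x)) :=
      ((hball x hx).2.continuousAt.tendsto.comp hline).mono_left nhdsWithin_le_nhds
    have h2 : Tendsto (fun s : ℂ => F (x + s • Pi.single i (1:ℂ))) (𝓝[≠] 0) (𝓝 0) := by
      refine tendsto_const_nhds.congr' ?_
      have h3 := (hline.eventually (Metric.isOpen_ball.mem_nhds hx))
      filter_upwards [nhdsWithin_le_nhds h3, self_mem_nhdsWithin] with s hs hs0
      have h4 := (hball _ hs).1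
      have h5 : (x + s • (Pi.single i (1:ℂ) : Fin n → ℂ)) i = s := by simp [hxi]
      change (x + s • (Pi.single i (1:ℂ) : Fin n → ℂ)) i * F _ = 0 at h4
      rw [h5] at h4
      rcases mul_eq_zero.1 h4 with h6 | h6
      · exact absurd h6 hs0
      · exact h6.symm
    exact tendsto_nhds_unique h1 h2
  · have := (hball x hx).1
    rcases mul_eq_zero.1 this with h1 | h1
    · exact absurd h1 hxi
    · exact h1

/-- Ideal generated by the first `r` coordinates. -/
def Jr (n r : ℕ) : Ideal (On n) := Ideal.span {g | ∃ j : Fin n, (j : ℕ) < r ∧ g = coordG j}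

lemma Jr_zero : Jr n 0 = ⊥ := by simp [Jr]

lemma coordG_mem_Jr {r : ℕ} {j : Fin n} (h : (j : ℕ) < r) : coordG j ∈ Jr n r :=
  Ideal.subset_span ⟨j, h, rfl⟩

lemma Jr_succ {r : ℕ} (hr : r < n) : Jr n (r + 1) = Jr n r ⊔ Ideal.span {coordG ⟨r, hr⟩} := by
  apply le_antisymm
  · rw [Jr, Ideal.span_le]
    rintro _ ⟨j, hj, rfl⟩
    rcases Nat.lt_succ_iff_lt_or_eq.1 hj with h | h
    · exact Ideal.mem_sup_left (coordG_mem_Jr h)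
    · apply Ideal.mem_sup_right
      have : j = ⟨r, hr⟩ := Fin.ext h
      rw [this]
      exact Ideal.mem_span_singleton_self _
  · refine sup_le (Ideal.span_mono ?_) ?_
    · rintro _ ⟨j, hj, rfl⟩
      exact ⟨j, by omega, rfl⟩
    · rw [Ideal.span_singleton_le_iff_mem]
      exact coordG_mem_Jr (by simp)

/-- Substituting zero for the first `r` coordinates. -/
lemma exists_sgr (r : ℕ) (hr : r ≤ n) : ∃ σ : On n →ₐ[ℂ] On n,
    (∀ g, g - σ g ∈ Jr n r) ∧ (∀ g ∈ Jr n r, σ g = 0) ∧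
    (∀ j : Fin n, r ≤ (j : ℕ) → σ (coordG j) = coordG j) ∧ (∀ g, evH (σ g) = evH g) ∧
    (r = n → ∀ g, σ g = algebraMap ℂ _ (evH g)) := by
  let φ : (Fin n → ℂ) → (Fin n → ℂ) := fun x j => if (j : ℕ) < r then 0 else x j
  have hφ : AnalyticAt ℂ φ 0 := by
    rw [analyticAt_pi_iff]
    intro j
    by_cases h : (j : ℕ) < r
    · simp only [φ, h, if_true]; exact analyticAt_const
    · simp only [φ, h, if_false]
      exact (ContinuousLinearMap.proj (R := ℂ) (φ := fun _ : Fin n => ℂ) j).analyticAt _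
  have h0 : φ 0 = 0 := by ext j; simp [φ]
  refine ⟨compOn φ hφ h0, ?_, ?_, ?_, ?_, ?_⟩
  · have key : ∀ k ≤ r, ∀ g : On n, ∃ g', g - g' ∈ Jr n k ∧
        (compOn φ hφ h0 g = compOn φ hφ h0 g') ∧ ∃ F', ∃ hF' : AnalyticAt ℂ F' 0, ∃ F, ∃ hF : AnalyticAt ℂ F 0, g = mkOn F hF ∧ g' = mkOn F' hF' ∧
          F' = fun x => F (fun j => if (j : ℕ) < k then 0 else x j) := by
      intro k
      induction k with
      | zero =>
        intro _ g
        obtain ⟨F, hF, rfl⟩ := exists_mkOn g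
        refine ⟨mkOn F hF, by simp, rfl, F, hF, F, hF, rfl, rfl, ?_⟩
        simp
      | succ k ih =>
        intro hk g
        obtain ⟨g', h1, h2, F', hF', F, hF, rfl, rfl, hFF⟩ := ih (by omega) g
        have hkn : k < n := by omega
        obtain ⟨q, hq⟩ := sg_sub_mem ⟨k, hkn⟩ (mkOn F' hF')
        refine ⟨sg ⟨k, hkn⟩ (mkOn F' hF'), ?_, ?_, ?_⟩
        · have : mkOn F hF - sg ⟨k, hkn⟩ (mkOn F' hF') =
            (mkOn F hF - mkOn F' hF') + (mkOn F' hF' - sg ⟨k, hkn⟩ (mkOn F' hF')) := by ring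
          rw [this, hq, Jr_succ hkn]
          refine Ideal.add_mem _ (Ideal.mem_sup_left h1) (Ideal.mem_sup_right ?_)
          exact Ideal.mul_mem_right _ _ (Ideal.mem_span_singleton_self _)
        · rw [h2]
          have h3 : mkOn F' hF' = (mkOn F' hF' - sg ⟨k, hkn⟩ (mkOn F' hF')) + sg ⟨k, hkn⟩ (mkOn F' hF') := by ring
          conv_lhs => rw [h3]
          rw [hq, map_add, map_mul]
          have h4 : compOn φ hφ h0 (coordG ⟨k, hkn⟩) = 0 := by
            rw [coordG_eq, compOn_mkOn, zero_On, mkOn_eq_iff]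
            filter_upwards with x
            simp only [φ]
            rw [if_pos (by change k < r; omega)]
          rw [h4]; simp
        · rw [sg, compOn_mkOn]
          refine ⟨_, _, F, hF, rfl, rfl, ?_⟩
          funext x
          rw [hFF]
          change F _ = F _
          congr 1
          funext j
          by_cases hj : (j : ℕ) < k
          · rw [if_pos hj, if_pos (by omega)]
          · rw [if_neg hj]
            by_cases hj2 : (j : ℕ) = k
            · rw [if_pos (by omega)]
              have : j = ⟨k, hkn⟩ := Fin.ext hj2
              rw [this, killMap_same]
            · rw [if_neg (by omega), killMap_ne (fun h => hj2 (by rw [h]))]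
    intro g
    obtain ⟨g', h1, h2, F', hF', F, hF, rfl, rfl, hFF⟩ := key r le_rfl g
    have : compOn φ hφ h0 (mkOn F hF) = mkOn F' hF' := by
      rw [compOn_mkOn, mkOn_eq_iff, hFF]
    rw [this]
    exact h1
  · intro g hg
    rw [← RingHom.mem_ker]
    revert g
    change Jr n r ≤ _
    rw [Jr, Ideal.span_le]
    rintro _ ⟨j, hj, rfl⟩
    rw [SetLike.mem_coe, RingHom.mem_ker]
    rw [coordG_eq, compOn_mkOn, zero_On, mkOn_eq_iff]
    filter_upwards with x
    simp [φ, hj]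
  · intro j hj
    rw [coordG_eq, compOn_mkOn, mkOn_eq_iff]
    filter_upwards with x
    simp only [φ]
    rw [if_neg (by omega)]
  · intro g
    obtain ⟨F, hF, rfl⟩ := exists_mkOn g
    rw [compOn_mkOn, evH_mkOn, evH_mkOn, h0]
  · intro h g
    obtain ⟨F, hF, rfl⟩ := exists_mkOn g
    rw [compOn_mkOn, evH_mkOn, algebraMap_On, mkOn_eq_iff]
    filter_upwards with x
    congr 1
    funext j
    simp only [φ]
    rw [if_pos (by omega)]; rfl

lemma Jr_n : Jr n n = mId n := by
  apply le_antisymm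
  · rw [Jr, Ideal.span_le]
    rintro _ ⟨j, hj, rfl⟩
    rw [SetLike.mem_coe, mem_mId, coordG_eq, evH_mkOn]
    rfl
  · intro g hg
    obtain ⟨σ, h1, _, _, _, h5⟩ := exists_sgr (n := n) n le_rfl
    have := h1 g
    rw [h5 rfl, mem_mId.1 hg, map_zero, sub_zero] at this
    exact this

lemma mId_eq_span : mId n = Ideal.span (Set.range (coordG (n := n))) := by
  rw [← Jr_n, Jr]
  congr 1
  ext g
  constructor
  · rintro ⟨j, _, rfl⟩; exact ⟨j, rfl⟩
  · rintro ⟨j, rfl⟩; exact ⟨j, j.2, rfl⟩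

lemma coordG_mem (i : Fin n) : coordG i ∈ mId n := by
  rw [mId_eq_span]; exact Ideal.subset_span ⟨i, rfl⟩

lemma Jr_regular {r : ℕ} (hr : r < n) {g : On n} (h : coordG ⟨r, hr⟩ * g ∈ Jr n r) :
    g ∈ Jr n r := by
  obtain ⟨σ, h1, h2, h3, _, _⟩ := exists_sgr (n := n) r hr.le
  have e := h2 _ h
  rw [map_mul, h3 _ le_rfl] at e
  have := h1 g
  rwa [coordG_regular _ e, sub_zero] at this

end Division

section Koszul

universe uK

/-- Underlying module of the Koszul complex. -/
def KC (R : Type uK) : ℕ → Type uK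
  | 0 => R
  | n + 1 => KC R n × KC R n

instance KC.addCommGroup (R : Type uK) [CommRing R] : ∀ n, AddCommGroup (KC R n)
  | 0 => inferInstanceAs (AddCommGroup R)
  | n + 1 =>
    letI := KC.addCommGroup R n
    inferInstanceAs (AddCommGroup (KC R n × KC R n))

instance KC.module (R : Type uK) [CommRing R] : ∀ n, Module R (KC R n)
  | 0 => inferInstanceAs (Module R R)
  | n + 1 =>
    letI := KC.module R n
    inferInstanceAs (Module R (KC R n × KC R n))

variable {R : Type uK} [CommRing R]

/-- Identification of the base module. -/
def kz : R ≃ₗ[R] KC R 0 := LinearEquiv.refl R R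

/-- Identification of the successor module. -/
def kp (n : ℕ) : (KC R n × KC R n) ≃ₗ[R] KC R (n + 1) := LinearEquiv.refl R (KC R n × KC R n)

lemma kp_surj {n : ℕ} (w : KC R (n + 1)) : ∃ u v, w = kp n (u, v) :=
  ⟨((kp n).symm w).1, ((kp n).symm w).2, by simp⟩

lemma kz_surj (w : KC R 0) : ∃ u, w = kz u := ⟨kz.symm w, by simp⟩

lemma kp_inj {n : ℕ} {u v u' v' : KC R n} : kp n (u, v) = kp n (u', v') ↔ u = u' ∧ v = v' := by
  rw [(kp n).injective.eq_iff, Prod.mk.injEq]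

lemma kp_add {n : ℕ} (u v u' v' : KC R n) :
    kp n (u, v) + kp n (u', v') = kp n (u + u', v + v') := by
  rw [← map_add]; rfl

lemma kp_smul {n : ℕ} (c : R) (u v : KC R n) : c • kp n (u, v) = kp n (c • u, c • v) := by
  rw [← map_smul]; rfl

/-- The two-by-two block linear map. -/
def kblock {n : ℕ} (a b c d : KC R n →ₗ[R] KC R n) : KC R (n + 1) →ₗ[R] KC R (n + 1) :=
  (kp n).toLinearMap ∘ₗ
    ((a ∘ₗ LinearMap.fst R _ _ + b ∘ₗ LinearMap.snd R _ _).prod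
     (c ∘ₗ LinearMap.fst R _ _ + d ∘ₗ LinearMap.snd R _ _)) ∘ₗ (kp n).symm.toLinearMap

lemma kblock_apply {n : ℕ} (a b c d : KC R n →ₗ[R] KC R n) (u v : KC R n) :
    kblock a b c d (kp n (u, v)) = kp n (a u + b v, c u + d v) := by
  simp [kblock]

/-- The Koszul differential. -/
def kd (h : ℕ → R) : ∀ n, KC R n →ₗ[R] KC R n
  | 0 => 0
  | n + 1 => kblock (kd h n) (h n • LinearMap.id) 0 (-kd h n)

lemma kd_zero (h : ℕ → R) (u : KC R 0) : kd h 0 u = 0 := rfl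

lemma kd_succ (h : ℕ → R) (n : ℕ) (u v : KC R n) :
    kd h (n + 1) (kp n (u, v)) = kp n (kd h n u + h n • v, -kd h n v) := by
  rw [kd, kblock_apply]; simp

/-- Projection to degree `p`. -/
def kpr : ∀ n : ℕ, ℤ → (KC R n →ₗ[R] KC R n)
  | 0, p => if p = 0 then LinearMap.id else 0
  | n + 1, p => kblock (kpr n p) 0 0 (kpr n (p - 1))

lemma kpr_succ (n : ℕ) (p : ℤ) (u v : KC R n) :
    kpr (n + 1) p (kp n (u, v)) = kp n (kpr n p u, kpr n (p - 1) v) := by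
  rw [kpr, kblock_apply]; simp

lemma kd_kd (h : ℕ → R) (n : ℕ) (u : KC R n) : kd h n (kd h n u) = 0 := by
  induction n with
  | zero => rfl
  | succ n ih =>
    obtain ⟨a, b, rfl⟩ := kp_surj u
    rw [kd_succ, kd_succ, map_add, ih, map_neg, ih, map_smul]
    simp

lemma kd_pr (h : ℕ → R) (n : ℕ) (p : ℤ) (u : KC R n) :
    kd h n (kpr n p u) = kpr n (p - 1) (kd h n u) := by
  induction n generalizing p with
  | zero => simp [kd_zero]
  | succ n ih =>
    obtain ⟨a, b, rfl⟩ := kp_surj u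
    rw [kpr_succ, kd_succ, kd_succ, kpr_succ, map_add, map_smul, map_neg, ih, ih]

lemma kpr_idem (n : ℕ) (p : ℤ) (u : KC R n) : kpr n p (kpr n p u) = kpr n p u := by
  induction n generalizing p with
  | zero => simp only [kpr]; split_ifs <;> simp
  | succ n ih =>
    obtain ⟨a, b, rfl⟩ := kp_surj u
    rw [kpr_succ, kpr_succ, ih, ih]

lemma kpr_neg (n : ℕ) {p : ℤ} (hp : p < 0) (u : KC R n) : kpr n p u = 0 := by
  induction n generalizing p with
  | zero => simp only [kpr]; rw [if_neg hp.ne]; simp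
  | succ n ih =>
    obtain ⟨a, b, rfl⟩ := kp_surj u
    rw [kpr_succ, ih hp, ih (by omega)]
    exact map_zero (kp n)

lemma kpr_large (n : ℕ) {p : ℤ} (hp : (n : ℤ) < p) (u : KC R n) : kpr n p u = 0 := by
  induction n generalizing p with
  | zero => simp only [kpr]; rw [if_neg (by push_cast at hp; omega)]; simp
  | succ n ih =>
    obtain ⟨a, b, rfl⟩ := kp_surj u
    push_cast at hp
    rw [kpr_succ, ih (by omega), ih (by omega)]
    exact map_zero (kp n)

/-- `c` is null-homotopic. -/
def KHt (h : ℕ → R) (n : ℕ) (c : R) : Prop :=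
  ∃ s : KC R n →ₗ[R] KC R n, (∀ u, kd h n (s u) + s (kd h n u) = c • u) ∧
    ∀ p u, s (kpr n p u) = kpr n (p + 1) (s u)

lemma kht_gen (h : ℕ → R) (n : ℕ) (i : ℕ) (hi : i < n) : KHt h n (h i) := by
  induction n with
  | zero => omega
  | succ n ih =>
    by_cases hin : i = n
    · subst hin
      refine ⟨kblock 0 0 LinearMap.id 0, ?_, ?_⟩
      · intro w
        obtain ⟨u, v, rfl⟩ := kp_surj w
        rw [kblock_apply, kd_succ, kd_succ, kblock_apply, kp_add, kp_smul, kp_inj]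
        simp
      · intro p w
        obtain ⟨u, v, rfl⟩ := kp_surj w
        rw [kpr_succ, kblock_apply, kblock_apply, kpr_succ, kp_inj]
        simp
    · obtain ⟨t, h1, h2⟩ := ih (by omega)
      refine ⟨kblock t 0 0 (-t), ?_, ?_⟩
      · intro w
        obtain ⟨u, v, rfl⟩ := kp_surj w
        rw [kblock_apply, kd_succ, kd_succ, kblock_apply, kp_add, kp_smul, kp_inj, ← h1 u, ← h1 v]
        constructor
        · simp; abel
        · simp
      · intro p w
        obtain ⟨u, v, rfl⟩ := kp_surj w
        rw [kpr_succ, kblock_apply, kblock_apply, kpr_succ, kp_inj]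
        simp [h2]

lemma kht_ideal (h : ℕ → R) (n : ℕ) {c : R} (hc : c ∈ Ideal.span {g | ∃ i, i < n ∧ g = h i}) :
    KHt h n c := by
  induction hc using Submodule.span_induction with
  | mem x hx => obtain ⟨i, hi, rfl⟩ := hx; exact kht_gen h n i hi
  | zero => exact ⟨0, by simp, by simp⟩
  | add a b _ _ ha hb =>
    obtain ⟨s, h1, h2⟩ := ha
    obtain ⟨t, h3, h4⟩ := hb
    refine ⟨s + t, fun u => ?_, fun p u => ?_⟩
    · rw [add_smul, ← h1, ← h3]; simp; abel
    · simp [h2, h4]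
  | smul a b _ hb =>
    obtain ⟨s, h1, h2⟩ := hb
    refine ⟨a • s, fun u => ?_, fun p u => ?_⟩
    · rw [smul_eq_mul, mul_smul, ← h1]; simp
    · simp [h2]

lemma lin_smul_top {M : Type*} [AddCommGroup M] [Module R M] (J : Ideal R) (f : M →ₗ[R] M) {u : M}
    (hu : u ∈ J • (⊤ : Submodule R M)) : f u ∈ J • (⊤ : Submodule R M) := by
  have : f u ∈ (J • (⊤ : Submodule R M)).map f := Submodule.mem_map_of_mem hu
  rw [Submodule.map_smul''] at this
  exact Submodule.smul_mono le_rfl le_top this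

lemma mem_kp_smul_top {n : ℕ} (J : Ideal R) (u v : KC R n) :
    kp n (u, v) ∈ J • (⊤ : Submodule R (KC R (n + 1))) ↔
      u ∈ J • (⊤ : Submodule R (KC R n)) ∧ v ∈ J • (⊤ : Submodule R (KC R n)) := by
  constructor
  · intro h
    have h1 : ∀ f : KC R (n + 1) →ₗ[R] KC R n, f (kp n (u, v)) ∈ J • (⊤ : Submodule R (KC R n)) := by
      intro f
      have : f _ ∈ (J • (⊤ : Submodule R (KC R (n + 1)))).map f := Submodule.mem_map_of_mem h
      rw [Submodule.map_smul''] at this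
      exact Submodule.smul_mono le_rfl le_top this
    exact ⟨by simpa using h1 (LinearMap.fst R _ _ ∘ₗ (kp n).symm.toLinearMap),
      by simpa using h1 (LinearMap.snd R _ _ ∘ₗ (kp n).symm.toLinearMap)⟩
  · rintro ⟨hu, hv⟩
    have h1 : ∀ f : KC R n →ₗ[R] KC R (n + 1), ∀ u ∈ J • (⊤ : Submodule R (KC R n)),
        f u ∈ J • (⊤ : Submodule R (KC R (n + 1))) := by
      intro f u hu
      have : f _ ∈ (J • (⊤ : Submodule R (KC R n))).map f := Submodule.mem_map_of_mem hu
      rw [Submodule.map_smul''] at this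
      exact Submodule.smul_mono le_rfl le_top this
    have h2 := Submodule.add_mem _ (h1 ((kp n).toLinearMap ∘ₗ LinearMap.inl R _ _) u hu)
      (h1 ((kp n).toLinearMap ∘ₗ LinearMap.inr R _ _) v hv)
    simpa [kp_add] using h2

lemma k_regular {x : R} {J : Ideal R} (hx : ∀ g, x * g ∈ J → g ∈ J) (n : ℕ) (u : KC R n)
    (hu : x • u ∈ J • (⊤ : Submodule R (KC R n))) : u ∈ J • (⊤ : Submodule R (KC R n)) := by
  induction n with
  | zero =>
    change R at u
    change x • u ∈ J • (⊤ : Submodule R R) at hu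
    change u ∈ J • (⊤ : Submodule R R)
    rw [smul_eq_mul, Ideal.mul_top] at *
    exact hx u hu
  | succ n ih =>
    obtain ⟨a, b, rfl⟩ := kp_surj u
    rw [kp_smul, mem_kp_smul_top] at hu
    rw [mem_kp_smul_top]
    exact ⟨ih _ hu.1, ih _ hu.2⟩

lemma koszul_claim (h : ℕ → R) (n : ℕ) (x : ℕ → R) (J : ℕ → Ideal R)
    (hJ : ∀ r < n, J (r + 1) = J r ⊔ Ideal.span {x r})
    (hx : ∀ r < n, ∀ g, x r * g ∈ J r → g ∈ J r)
    (hk : ∀ r < n, ∃ k, x r ^ k ∈ Ideal.span {g | ∃ i, i < n ∧ g = h i}) (e : ℕ) :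
    ∀ r, r + e = n → ∀ p : ℤ, (r : ℤ) < p → ∀ u : KC R n, kpr n p u = u →
      kd h n u ∈ J r • (⊤ : Submodule R (KC R n)) →
      ∃ v, kpr n (p + 1) v = v ∧ u - kd h n v ∈ J r • (⊤ : Submodule R (KC R n)) := by
  induction e with
  | zero =>
    intro r hr p hp u hu _
    refine ⟨0, by simp, ?_⟩
    rw [← hu, kpr_large n (by omega)]
    simp
  | succ e ih =>
    intro r hr p hp u hu hdu
    have hrn : r < n := by omega
    have IH := ih (r + 1) (by omega)
    obtain ⟨k, hk⟩ := hk r hrn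
    obtain ⟨s, hs1, hs2⟩ := kht_ideal h n hk
    have start : ∃ w, kpr n (p + 1) w = w ∧
        x r ^ k • u - kd h n w ∈ J r • (⊤ : Submodule R (KC R n)) := by
      refine ⟨s u, ?_, ?_⟩
      · rw [← hs2, hu]
      · rw [← hs1 u, add_sub_cancel_left]
        exact lin_smul_top _ s hdu
    clear hk hs1 hs2
    induction k with
    | zero => simpa using start
    | succ k ihk =>
      apply ihk
      obtain ⟨w, hw1, hw2⟩ := start
      have hle : J r • (⊤ : Submodule R (KC R n)) ≤ J (r + 1) • ⊤ := by
        rw [hJ r hrn]; exact Submodule.smul_mono le_sup_left le_rfl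
      have hxm : ∀ z : KC R n, x r • z ∈ J (r + 1) • (⊤ : Submodule R (KC R n)) := by
        intro z
        refine Submodule.smul_mem_smul ?_ trivial
        rw [hJ r hrn]
        exact Ideal.mem_sup_right (Ideal.mem_span_singleton_self _)
      have hdw : kd h n w ∈ J (r + 1) • (⊤ : Submodule R (KC R n)) := by
        have h1 := Submodule.sub_mem _ (hxm (x r ^ k • u)) (hle hw2)
        rw [smul_smul, ← pow_succ'] at h1
        simpa using h1
      obtain ⟨v, hv1, hv2⟩ := IH (p + 1) (by push_cast; omega) w hw1 hdw
      rw [hJ r hrn, Submodule.sup_smul, Submodule.mem_sup] at hv2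
      obtain ⟨j, hj, y, hy, hjy⟩ := hv2
      rw [Submodule.ideal_span_singleton_smul, Submodule.mem_smul_pointwise_iff_exists] at hy
      obtain ⟨z, _, rfl⟩ := hy
      have hhom : kpr n (p + 1) (w - kd h n v) = w - kd h n v := by
        rw [map_sub, hw1]
        have := kd_pr h n (p + 1 + 1) v
        rw [hv1] at this
        conv_rhs => rw [this]
        rw [show p + 1 + 1 - 1 = p + 1 by ring]
      refine ⟨kpr n (p + 1) z, kpr_idem _ _ _, ?_⟩
      apply k_regular (hx r hrn)
      have e1 : w = kd h n v + (kpr n (p + 1) j + x r • kpr n (p + 1) z) := by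
        rw [← map_smul, ← map_add, hjy, hhom]; abel
      have e2 : kd h n w = kd h n (kpr n (p + 1) j) + x r • kd h n (kpr n (p + 1) z) := by
        conv_lhs => rw [e1]
        rw [map_add, kd_kd, zero_add, map_add, map_smul]
      have h3 := lin_smul_top _ (kd h n) (lin_smul_top _ (kpr n (p + 1)) hj)
      have e3 : x r • (x r ^ k • u - kd h n (kpr n (p + 1) z)) =
          (x r ^ (k + 1) • u - kd h n w) + kd h n (kpr n (p + 1) j) := by
        rw [e2, smul_sub, smul_smul, ← pow_succ']; abel
      rw [e3]
      exact Submodule.add_mem _ hw2 h3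

/-- Scalar component. -/
def kpi : ∀ n, KC R n →ₗ[R] R
  | 0 => kz.symm.toLinearMap
  | n + 1 => kpi n ∘ₗ LinearMap.fst R _ _ ∘ₗ (kp n).symm.toLinearMap

lemma kpi_succ (n : ℕ) (u v : KC R n) : kpi (n + 1) (kp n (u, v)) = kpi n u := by
  simp [kpi]

/-- The unit. -/
def kone : ∀ n, KC R n
  | 0 => kz 1
  | n + 1 => kp n (kone n, 0)

lemma kpi_one (n : ℕ) : kpi n (kone n : KC R n) = 1 := by
  induction n with
  | zero => simp [kpi, kone]
  | succ n ih => rw [kone, kpi_succ, ih]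

lemma kd_one (h : ℕ → R) (n : ℕ) : kd h n (kone n) = 0 := by
  induction n with
  | zero => rfl
  | succ n ih => rw [kone, kd_succ, ih]; simp

lemma kpr_one (n : ℕ) : kpr n 0 (kone n : KC R n) = kone n := by
  induction n with
  | zero => simp [kpr, kone]
  | succ n ih => rw [kone, kpr_succ, ih]; simp

/-- Degree one elements. -/
def kvec (c : ℕ → R) : ∀ n, KC R n
  | 0 => 0
  | n + 1 => kp n (kvec c n, c n • kone n)

lemma kd_vec (h c : ℕ → R) (n : ℕ) :
    kd h n (kvec c n) = (∑ i ∈ Finset.range n, c i * h i) • kone n := by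
  induction n with
  | zero => simp [kvec]
  | succ n ih =>
    rw [kvec, kd_succ, ih, kone, kp_smul, kp_inj, Finset.sum_range_succ, map_smul, kd_one]
    refine ⟨?_, by simp⟩
    rw [smul_smul, ← add_smul, mul_comm (h n)]

lemma kpr_vec (c : ℕ → R) (n : ℕ) : kpr n 1 (kvec c n) = kvec c n := by
  induction n with
  | zero => simp [kvec]
  | succ n ih =>
    rw [kvec, kpr_succ, ih, map_smul, show (1 : ℤ) - 1 = 0 by ring, kpr_one]

lemma kpi_kd (n : ℕ) (b : KC R n) : ∃ c : ℕ → R, ∀ f : ℕ → R,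
    kpi n (kd f n b) = ∑ i ∈ Finset.range n, c i * f i := by
  induction n with
  | zero => exact ⟨0, fun f => by simp [kd_zero]⟩
  | succ n ih =>
    obtain ⟨u, v, rfl⟩ := kp_surj b
    obtain ⟨c, hc⟩ := ih u
    refine ⟨fun i => if i = n then kpi n v else c i, fun f => ?_⟩
    rw [kd_succ, kpi_succ, map_add, hc, Finset.sum_range_succ, map_smul, smul_eq_mul,
      mul_comm (f n)]
    simp only [if_true]
    congr 1
    refine Finset.sum_congr rfl (fun i hi => ?_)
    rw [if_neg (by have := Finset.mem_range.1 hi; omega)]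

lemma kpi_kd_kd (f h : ℕ → R) (n : ℕ) (b : KC R n) :
    kpi n (kd f n (kd h n b)) ∈
      Ideal.span {g | ∃ i j, i < n ∧ j < n ∧ g = f i * h j - f j * h i} := by
  induction n with
  | zero => simp [kd_zero]
  | succ n ih =>
    obtain ⟨u, v, rfl⟩ := kp_surj b
    rw [kd_succ, kd_succ, kpi_succ, map_add, map_add, map_add, map_smul, map_smul, map_smul,
      map_neg]
    obtain ⟨c, hc⟩ := kpi_kd n v
    rw [hc, hc, add_assoc]
    refine Ideal.add_mem _ (Ideal.span_mono ?_ (ih u)) ?_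
    · rintro _ ⟨i, j, hi, hj, rfl⟩
      exact ⟨i, j, by omega, by omega, rfl⟩
    · have : h n • ∑ i ∈ Finset.range n, c i * f i + f n • -∑ i ∈ Finset.range n, c i * h i =
        ∑ i ∈ Finset.range n, c i * (f i * h n - f n * h i) := by
        rw [smul_neg, ← sub_eq_add_neg, Finset.smul_sum, Finset.smul_sum,
          ← Finset.sum_sub_distrib]
        refine Finset.sum_congr rfl (fun i _ => ?_)
        simp only [smul_eq_mul]; ring
      rw [this]
      refine Ideal.sum_mem _ (fun i hi => Ideal.mul_mem_left _ _ (Ideal.subset_span ?_))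
      exact ⟨i, n, by have := Finset.mem_range.1 hi; omega, by omega, rfl⟩

/-- Exactness of the Koszul complex in degree one. -/
lemma koszul_H1 (n : ℕ) (h : ℕ → R) (x : ℕ → R) (J : ℕ → Ideal R) (hJ0 : J 0 = ⊥)
    (hJ : ∀ r < n, J (r + 1) = J r ⊔ Ideal.span {x r})
    (hx : ∀ r < n, ∀ g, x r * g ∈ J r → g ∈ J r)
    (hk : ∀ r < n, ∃ k, x r ^ k ∈ Ideal.span {g | ∃ i, i < n ∧ g = h i})
    (c : ℕ → R) (hc : ∑ i ∈ Finset.range n, c i * h i = 0) (f : ℕ → R) :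
    ∑ i ∈ Finset.range n, c i * f i ∈
      Ideal.span {g | ∃ i j, i < n ∧ j < n ∧ g = f i * h j - f j * h i} := by
  obtain ⟨v, -, hv⟩ := koszul_claim h n x J hJ hx hk n 0 (by omega) 1 (by simp) (kvec c n)
    (kpr_vec c n) (by rw [kd_vec, hc]; simp)
  rw [hJ0, Submodule.bot_smul, Submodule.mem_bot, sub_eq_zero] at hv
  have h1 : kpi n (kd f n (kvec c n)) = ∑ i ∈ Finset.range n, c i * f i := by
    rw [kd_vec, map_smul, kpi_one]; simp
  rw [← h1, hv]
  exact kpi_kd_kd f h n v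

end Koszul

section MaxIdeal

lemma artin_pow_le {R A : Type*} [CommRing R] [CommRing A] [IsArtinianRing A] (φ : R →+* A)
    (hφ : Function.Surjective φ) (m : Ideal R) (hm : ∀ g ∈ m, ∀ y, IsUnit (g * y + 1)) :
    ∃ K, m ^ K ≤ RingHom.ker φ := by
  obtain ⟨K, hK⟩ := IsArtinianRing.isNilpotent_jacobson_bot (R := A)
  refine ⟨K, ?_⟩
  have h1 : m.map φ ≤ Ideal.jacobson ⊥ := by
    rw [Ideal.map_le_iff_le_comap]
    intro g hg
    rw [Ideal.mem_comap, Ideal.mem_jacobson_bot]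
    intro y
    obtain ⟨y, rfl⟩ := hφ y
    have := (hm g hg y).map φ
    simpa using this
  have h2 : (m ^ K).map φ ≤ ⊥ := by
    rw [Ideal.map_pow]
    refine (Ideal.pow_right_mono h1 K).trans ?_
    rw [hK]; exact le_rfl
  rw [Ideal.map_le_iff_le_comap] at h2
  exact h2

lemma fin_pow_le {R : Type*} [CommRing R] [Algebra ℂ R] (I m : Ideal R)
    (hI : FiniteDimensional ℂ (R ⧸ I)) (hm : ∀ g ∈ m, ∀ y, IsUnit (g * y + 1)) :
    ∃ K, m ^ K ≤ I := by
  have : IsArtinianRing (R ⧸ I) := IsArtinianRing.of_finite ℂ _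
  obtain ⟨K, hK⟩ := artin_pow_le (Ideal.Quotient.mk I) Ideal.Quotient.mk_surjective m hm
  rw [Ideal.mk_ker] at hK
  exact ⟨K, hK⟩

lemma exists_mId_pow_le {I : Ideal (On n)} (hI : FiniteDimensional ℂ (On n ⧸ I)) :
    ∃ K, mId n ^ K ≤ I := by
  have hm : ∀ g ∈ mId n, ∀ y : On n, IsUnit (g * y + 1) := fun g hg y => by
    apply isUnit_On
    rw [map_add, map_mul, mem_mId.1 hg]
    simp
  exact fin_pow_le I (mId n) hI hm

lemma pd_mem_pow (i : Fin n) (N : ℕ) {g : On n} (hg : g ∈ mId n ^ (N + 1)) :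
    pd i g ∈ mId n ^ N := by
  induction N generalizing g with
  | zero => simp
  | succ N ih =>
    rw [pow_succ] at hg
    induction hg using Submodule.mul_induction_on' with
    | mem_mul_mem a ha b hb =>
      rw [pd_mul]
      refine Ideal.add_mem _ (Ideal.mul_mem_right _ _ ha) ?_
      rw [pow_succ, mul_comm b]
      exact Ideal.mul_mem_mul (ih ha) hb
    | add a _ b _ ha hb =>
      rw [pd_add]; exact Ideal.add_mem _ ha hb

lemma mId_one_pow {k : ℕ} : mId 1 ^ k = Ideal.span {(coordG 0 : On 1) ^ k} := by
  rw [mId_eq_span, ← Ideal.span_singleton_pow]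
  congr 2
  ext g
  simp only [Set.mem_range, Set.mem_singleton_iff]
  constructor
  · rintro ⟨j, rfl⟩; rw [Subsingleton.elim j 0]
  · rintro rfl; exact ⟨0, rfl⟩

/-- A linear form. -/
def linF (v : Fin n → ℂ) : On n := ∑ j, v j • coordG j

lemma linF_mem (v : Fin n → ℂ) : linF v ∈ mId n := by
  refine Ideal.sum_mem _ (fun j _ => ?_)
  rw [Algebra.smul_def]
  exact Ideal.mul_mem_left _ _ (coordG_mem j)

lemma linF_pow_not_mem {v : Fin n → ℂ} (hv : v ≠ 0) (k : ℕ) : linF v ^ k ∉ mId n ^ (k + 1) := by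
  intro h
  obtain ⟨j, hj⟩ := Function.ne_iff.1 hv
  simp only [Pi.zero_apply] at hj
  let φ : (Fin 1 → ℂ) → (Fin n → ℂ) := fun t => t 0 • Pi.single j (v j)⁻¹
  have hφ : AnalyticAt ℂ φ 0 := (coord_an 0 0).smul analyticAt_const
  have h0 : φ 0 = 0 := by simp [φ]
  have hc : ∀ i : Fin n, compOn φ hφ h0 (coordG i) = (Pi.single j (v j)⁻¹ : Fin n → ℂ) i • coordG 0 := by
    intro i
    rw [coordG_eq, compOn_mkOn, coordG_eq, Algebra.smul_def, algebraMap_On, mkOn_mul, mkOn_eq_iff]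
    filter_upwards with x
    simp [φ, mul_comm]
  have hl : compOn φ hφ h0 (linF v) = coordG 0 := by
    rw [linF, map_sum, Finset.sum_eq_single j]
    · rw [map_smul, hc, smul_smul, Pi.single_eq_same, mul_inv_cancel₀ hj, one_smul]
    · intro i _ hij
      rw [map_smul, hc, Pi.single_eq_of_ne hij]; simp
    · simp
  have hm : (mId n ^ (k + 1)).map (compOn φ hφ h0) ≤ mId 1 ^ (k + 1) := by
    rw [Ideal.map_pow]
    refine Ideal.pow_right_mono ?_ _
    rw [Ideal.map_le_iff_le_comap]
    intro g hg
    rw [Ideal.mem_comap, mem_mId]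
    obtain ⟨F, hF, rfl⟩ := exists_mkOn g
    rw [mem_mId, evH_mkOn] at hg
    rw [compOn_mkOn, evH_mkOn, h0, hg]
  have h1 := hm (Ideal.mem_map_of_mem _ h)
  rw [map_pow, hl, mId_one_pow, Ideal.mem_span_singleton] at h1
  obtain ⟨q, hq⟩ := h1
  have h2 : ∀ k : ℕ, ∀ g : On 1, coordG 0 ^ k * g = 0 → g = 0 := by
    intro k
    induction k with
    | zero => intro g hg; simpa using hg
    | succ k ih =>
      intro g hg
      rw [pow_succ', mul_assoc] at hg
      exact ih _ (coordG_regular 0 hg)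
  have h3 := h2 k (1 - coordG 0 * q) (by rw [mul_sub, ← mul_assoc, ← pow_succ, mul_one, ← hq, sub_self])
  have h4 := congrArg evH h3
  rw [map_sub, map_mul, mem_mId.1 (coordG_mem 0)] at h4
  simp at h4

lemma mId_pow_not_le [NeZero n] (k : ℕ) : ¬ mId n ^ k ≤ mId n ^ (k + 1) := by
  intro h
  have hv : (Pi.single 0 1 : Fin n → ℂ) ≠ 0 := by
    intro h; have := congrFun h 0; simp at this
  exact linF_pow_not_mem hv k (h (Ideal.pow_mem_pow (linF_mem _) k))

lemma exists_not_mem_pow [NeZero n] {f : On n} (hf : FiniteDimensional ℂ (On n ⧸ Jac n f)) :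
    ∃ N, f ∉ mId n ^ N := by
  obtain ⟨K, hK⟩ := exists_mId_pow_le hf
  refine ⟨K + 2, fun h => mId_pow_not_le (n := n) K (hK.trans ?_)⟩
  rw [Jac, Ideal.span_le]
  rintro _ ⟨i, rfl⟩
  exact pd_mem_pow i _ h

end MaxIdeal

section Hartogs

lemma local_division {G H : (Fin n → ℂ) → ℂ} {p : Fin n → ℂ} (i : Fin n)
    (hG : AnalyticAt ℂ G p) (hH : AnalyticAt ℂ H p) (hp : H p = 0)
    (hd : fderiv ℂ H p (Pi.single i 1) ≠ 0) (hz : ∀ᶠ x in 𝓝 p, H x = 0 → G x = 0) :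
    ∃ q, AnalyticAt ℂ q p ∧ ∀ᶠ x in 𝓝 p, G x = H x * q x := by
  let Φ : (Fin n → ℂ) → (Fin n → ℂ) := fun x => x + (H x - x i) • Pi.single i (1 : ℂ)
  have hΦ : AnalyticAt ℂ Φ p :=
    analyticAt_id.add ((hH.sub (coord_an i p)).smul analyticAt_const)
  have hΦi : ∀ x, Φ x i = H x := by intro x; simp [Φ]
  have hΦj : ∀ x j, j ≠ i → Φ x j = x j := by intro x j hj; simp [Φ, hj]
  have hder : HasFDerivAt Φ (fderiv ℂ Φ p) p := hΦ.differentiableAt.hasFDerivAt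
  have hinj : Function.Injective (fderiv ℂ Φ p) := by
    rw [injective_iff_map_eq_zero]
    intro v hv
    have e1 : ∀ j, j ≠ i → v j = 0 := by
      intro j hj
      have h1 := (hasFDerivAt_pi'.1 hder) j
      have h2 : HasFDerivAt (fun x : Fin n → ℂ => x j)
          (ContinuousLinearMap.proj (R := ℂ) (φ := fun _ : Fin n => ℂ) j) p :=
        (ContinuousLinearMap.proj (R := ℂ) (φ := fun _ : Fin n => ℂ) j).hasFDerivAt
      have h3 : (fun x => Φ x j) = (fun x : Fin n → ℂ => x j) := by
        funext x; exact hΦj x j hj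
      rw [h3] at h1
      have h4 := congrArg (fun L => L v) (h1.unique h2)
      simp only [ContinuousLinearMap.comp_apply, hv] at h4
      simpa using h4.symm
    have e2 : v = v i • Pi.single i (1 : ℂ) := by
      ext j
      by_cases hj : j = i
      · subst hj; simp
      · simp [hj, e1 j hj]
    have h1 := (hasFDerivAt_pi'.1 hder) i
    have h3 : (fun x => Φ x i) = H := by funext x; exact hΦi x
    rw [h3] at h1
    have h4 := congrArg (fun L => L v) (h1.unique hH.differentiableAt.hasFDerivAt)
    simp only [ContinuousLinearMap.comp_apply, hv] at h4
    rw [e2, map_smul] at h4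
    have h5 : v i * fderiv ℂ H p (Pi.single i 1) = 0 := by simpa using h4.symm
    rcases mul_eq_zero.1 h5 with h6 | h6
    · rw [e2, h6, zero_smul]
    · exact absurd h6 hd
  let A : (Fin n → ℂ) ≃L[ℂ] (Fin n → ℂ) :=
    (LinearEquiv.ofInjectiveEndo (fderiv ℂ Φ p).toLinearMap hinj).toContinuousLinearEquiv
  have hA : (A : (Fin n → ℂ) →L[ℂ] (Fin n → ℂ)) = fderiv ℂ Φ p := by
    ext v : 1; rfl
  have hstrict : HasStrictFDerivAt Φ (A : (Fin n → ℂ) →L[ℂ] (Fin n → ℂ)) p := by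
    rw [hA]; exact hΦ.hasStrictFDerivAt
  let E := hstrict.toOpenPartialHomeomorph Φ
  have hE : (E : (Fin n → ℂ) → (Fin n → ℂ)) = Φ := rfl
  have hps : p ∈ E.source := hstrict.mem_toOpenPartialHomeomorph_source
  have hΨ : AnalyticAt ℂ E.symm (Φ p) := by
    have := E.analyticAt_symm' (i := A) hps hΦ hA.symm
    exact this
  have hΨp : E.symm (Φ p) = p := E.left_inv hps
  have hG' : AnalyticAt ℂ (fun y => G (E.symm y)) (Φ p) := by
    rw [← hΨp] at hG
    exact hG.comp hΨ
  obtain ⟨Q, hQ, hdiv⟩ := division_at i (by rw [hΦi, hp]) hG'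
  refine ⟨fun x => Q (Φ x), hQ.comp hΦ, ?_⟩
  have hkill : killMap i (Φ p) = Φ p := by simp [killMap, hΦi, hp]
  have hk1 : Tendsto (killMap i) (𝓝 (Φ p)) (𝓝 (Φ p)) := by
    have := (killMap_analytic i (Φ p)).continuousAt.tendsto
    rwa [hkill] at this
  have hk2 : Tendsto (fun y => E.symm (killMap i y)) (𝓝 (Φ p)) (𝓝 p) := by
    have h1 := hΨ.continuousAt.tendsto
    rw [hΨp] at h1
    exact h1.comp hk1
  have hright : ∀ᶠ y in 𝓝 (Φ p), Φ (E.symm y) = y := E.eventually_right_inverse' hps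
  have hleft : ∀ᶠ x in 𝓝 p, E.symm (Φ x) = x := E.eventually_left_inverse hps
  have hall : ∀ᶠ y in 𝓝 (Φ p), G (E.symm y) = y i * Q y := by
    filter_upwards [hdiv, hk2.eventually hz, hk1.eventually hright] with y h1 h2 h3
    rw [← h1, h2, sub_zero]
    rw [← hΦi, h3, killMap_same]
  filter_upwards [hΦ.continuousAt.eventually hall, hleft] with x h1 h2
  rw [h2, hΦi] at h1
  exact h1

lemma hartogs {ρ : ℝ} (hρ : 0 < ρ) {q : (Fin n → ℂ) → ℂ} (i j : Fin n) (hij : j ≠ i)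
    (hq : ∀ x ∈ Metric.ball (0 : Fin n → ℂ) ρ, x ≠ 0 → AnalyticAt ℂ q x) :
    ∃ Q, AnalyticAt ℂ Q 0 ∧ ∀ᶠ x in 𝓝 (0 : Fin n → ℂ), x j ≠ 0 → Q x = q x := by
  let r := ρ / 2
  have hr : 0 < r := by positivity
  have hrρ : r < ρ := by simp only [r]; linarith
  let U : (Fin n → ℂ) × ℂ → (Fin n → ℂ) := fun z => z.1 + (z.2 - z.1 i) • Pi.single i (1 : ℂ)
  have hci : ∀ z, AnalyticAt ℂ (fun z : (Fin n → ℂ) × ℂ => z.1 i) z := fun z =>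
      ((ContinuousLinearMap.proj (R := ℂ) (φ := fun _ : Fin n => ℂ) i).comp
        (ContinuousLinearMap.fst ℂ (Fin n → ℂ) ℂ)).analyticAt z
  have hUa : ∀ z, AnalyticAt ℂ U z := by
    intro z
    exact analyticAt_fst.add ((analyticAt_snd.sub (hci z)).smul analyticAt_const)
  have hUi : ∀ x ζ, U (x, ζ) i = ζ := by intro x ζ; simp [U]
  have hUk : ∀ x ζ k, k ≠ i → U (x, ζ) k = x k := by intro x ζ k hk; simp [U, hk]
  have hUball : ∀ x ∈ Metric.ball (0 : Fin n → ℂ) r, ∀ ζ : ℂ, ‖ζ‖ ≤ r →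
      U (x, ζ) ∈ Metric.ball (0 : Fin n → ℂ) ρ := by
    intro x hx ζ hζ
    rw [mem_ball_zero_iff, pi_norm_lt_iff hr] at hx
    rw [mem_ball_zero_iff, pi_norm_lt_iff hρ]
    intro k
    by_cases hk : k = i
    · subst hk; rw [hUi]; linarith
    · rw [hUk _ _ _ hk]; linarith [hx k]
  let g : (Fin n → ℂ) × ℂ → ℂ := fun z => z.2 * Complex.I * ((z.2 - z.1 i)⁻¹ * q (U z))
  have hg : ∀ ζ : ℂ, ‖ζ‖ = r → AnalyticAt ℂ g (0, ζ) := by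
    intro ζ hζ
    have hζ0 : ζ ≠ 0 := by intro h; rw [h, norm_zero] at hζ; linarith
    have h1 : AnalyticAt ℂ q (U (0, ζ)) := by
      refine hq _ (hUball 0 (Metric.mem_ball_self hr) ζ hζ.le) ?_
      intro h
      have := congrFun h i
      rw [hUi] at this
      exact hζ0 this
    refine (analyticAt_snd.mul analyticAt_const).mul (AnalyticAt.mul ?_ (h1.comp (hUa _)))
    exact (analyticAt_snd.sub (hci _)).fun_inv (by simpa using hζ0)
  have hI := param_integral (g := g) (γ := fun t : ℝ => ((0 : Fin n → ℂ), circleMap 0 r t))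
    (continuous_const.prodMk (continuous_circleMap 0 r)) (a := 0) (b := 2 * Real.pi)
    (by positivity) (fun t _ => hg _ (by simp [abs_of_pos hr]))
  have hI' : AnalyticAt ℂ (fun x : Fin n → ℂ =>
      ∫ t in (0:ℝ)..(2 * Real.pi), g (((0 : Fin n → ℂ), circleMap 0 r t) + (x, 0))) 0 := by
    have hcomp : AnalyticAt ℂ (fun x : Fin n → ℂ => ((x, 0) : (Fin n → ℂ) × ℂ)) 0 :=
      analyticAt_id.prod analyticAt_const
    exact AnalyticAt.comp (f := fun x : Fin n → ℂ => ((x, 0) : (Fin n → ℂ) × ℂ))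
      (g := fun y => ∫ t in (0:ℝ)..(2 * Real.pi), g (((0 : Fin n → ℂ), circleMap 0 r t) + y)) hI hcomp
  refine ⟨fun x => (2 * Real.pi * Complex.I)⁻¹ *
    ∫ t in (0:ℝ)..(2 * Real.pi), g (((0 : Fin n → ℂ), circleMap 0 r t) + (x, 0)),
    analyticAt_const.mul hI', ?_⟩
  filter_upwards [Metric.ball_mem_nhds 0 hr] with x hx hxj
  have hd : DifferentiableOn ℂ (fun ζ => q (U (x, ζ))) (Metric.closedBall 0 r) := by
    intro ζ hζ
    rw [mem_closedBall_zero_iff] at hζ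
    have h1 : AnalyticAt ℂ q (U (x, ζ)) := by
      refine hq _ (hUball x hx ζ hζ) ?_
      intro h
      have := congrFun h j
      rw [hUk _ _ _ hij] at this
      exact hxj this
    have h2 : DifferentiableAt ℂ (fun ζ => U (x, ζ)) ζ := by
      simp only [U]; fun_prop
    exact (DifferentiableAt.comp (f := fun ζ => U (x, ζ)) ζ h1.differentiableAt h2).differentiableWithinAt
  have hw : x i ∈ Metric.ball (0 : ℂ) r := by
    rw [mem_ball_zero_iff, pi_norm_lt_iff hr] at hx
    rw [mem_ball_zero_iff]; exact hx i
  have hC := hd.circleIntegral_sub_inv_smul hw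
  have hUx : U (x, x i) = x := by simp [U]
  rw [circleIntegral] at hC
  have e : (∫ t in (0:ℝ)..(2 * Real.pi), g (((0 : Fin n → ℂ), circleMap 0 r t) + (x, 0))) =
      ∫ t in (0:ℝ)..(2 * Real.pi), deriv (circleMap 0 r) t •
        ((fun z => (z - x i)⁻¹ • q (U (x, z))) (circleMap 0 r t)) := by
    refine intervalIntegral.integral_congr (fun t _ => ?_)
    simp [g]
  have hne : (2 * Real.pi * Complex.I : ℂ) ≠ 0 := Complex.two_pi_I_ne_zero
  simp only at *
  rw [e, hC, hUx, smul_eq_mul, inv_mul_cancel_left₀ hne]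

lemma IX_eq_span (hn : 2 ≤ n) (H : (Fin n → ℂ) → ℂ) (hH : AnalyticAt ℂ H 0)
    (hiso : FiniteDimensional ℂ (On n ⧸ Jac n (mkOn H hH))) :
    IX n (H ⁻¹' {0}) = Ideal.span {mkOn H hH} := by
  apply le_antisymm
  swap
  · rw [Ideal.span_singleton_le_iff_mem, mem_IX]
    exact Eventually.of_forall (fun x hx => hx)
  intro g0 hg0
  obtain ⟨G, hG, rfl⟩ := exists_mkOn g0
  rw [mem_IX] at hg0
  -- derivative nonvanishing
  obtain ⟨K, hK⟩ := exists_mId_pow_le hiso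
  have hreg : ∀ᶠ x in 𝓝 (0 : Fin n → ℂ), x ≠ 0 → ∃ i, fderiv ℂ H x (Pi.single i 1) ≠ 0 := by
    have h1 : ∀ k : Fin n, ∀ᶠ x in 𝓝 (0 : Fin n → ℂ),
        (∀ i, fderiv ℂ H x (Pi.single i 1) = 0) → x k = 0 := by
      intro k
      have h2 : coordG k ^ K ∈ Jac n (mkOn H hH) := hK (Ideal.pow_mem_pow (coordG_mem k) K)
      rw [Jac, Ideal.mem_span_range_iff_exists_fun] at h2
      obtain ⟨c, hc⟩ := h2
      have h3 : mkOn (fun x : Fin n → ℂ => x k ^ K) ((coord_an k 0).pow K) =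
          mkOn (fun x => ∑ i, On.rep (c i) x * fderiv ℂ H x (Pi.single i 1))
            (Finset.univ.analyticAt_fun_sum
              (fun i _ => (On.rep_analyticAt (c i)).mul (pd_aux i hH))) := by
        have e1 : mkOn (fun x : Fin n → ℂ => x k ^ K) ((coord_an k 0).pow K) = coordG k ^ K := by
          rw [coordG_eq]; exact Subtype.ext rfl
        rw [e1, ← hc]
        have e2 : ∀ i, c i * pd i (mkOn H hH) =
            mkOn (fun x => On.rep (c i) x * fderiv ℂ H x (Pi.single i 1))
              ((On.rep_analyticAt (c i)).mul (pd_aux i hH)) := by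
          intro i
          rw [pd_mkOn, ← mkOn_mul (On.rep_analyticAt (c i)) (pd_aux i hH), mkOn_rep]
        rw [Finset.sum_congr rfl (fun i _ => e2 i)]
        apply Subtype.ext
        rw [AddSubmonoidClass.coe_finsetSum]
        have e3 : ∀ (s : Finset (Fin n)) (f : Fin n → (Fin n → ℂ) → ℂ),
            ∑ i ∈ s, ((f i : (Fin n → ℂ) → ℂ) : Filter.Germ (𝓝 (0 : Fin n → ℂ)) ℂ) =
            (((fun x => ∑ i ∈ s, f i x) : (Fin n → ℂ) → ℂ) : Filter.Germ (𝓝 (0 : Fin n → ℂ)) ℂ) := by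
          intro s f
          induction s using Finset.induction_on with
          | empty => simp; rfl
          | insert a s ha ih => simp only [Finset.sum_insert ha, ih]; rfl
        exact e3 _ _
      rw [mkOn_eq_iff] at h3
      filter_upwards [h3] with x hx h4
      simp only [h4, mul_zero, Finset.sum_const_zero] at hx
      exact eq_zero_of_pow_eq_zero hx
    filter_upwards [eventually_all.2 h1] with x hx hx0
    by_contra! hcon
    exact hx0 (funext fun k => hx k hcon)
  obtain ⟨ρ, hρ, hball⟩ := Metric.eventually_nhds_iff_ball.1
    (((hG.eventually_analyticAt.and hH.eventually_analyticAt).and hreg).and hg0.eventually_nhds)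
  have hloc : ∀ p ∈ Metric.ball (0 : Fin n → ℂ) ρ, p ≠ 0 → ∃ q, AnalyticAt ℂ q p ∧
      ∀ᶠ x in 𝓝 p, G x = H x * q x := by
    intro p hp hp0
    obtain ⟨⟨⟨hGp, hHp⟩, hregp⟩, hzp⟩ := hball p hp
    by_cases hHp0 : H p = 0
    · obtain ⟨i, hi⟩ := hregp hp0
      exact local_division i hGp hHp hHp0 hi hzp
    · refine ⟨fun x => G x * (H x)⁻¹, hGp.mul (hHp.fun_inv hHp0), ?_⟩
      filter_upwards [hHp.continuousAt.eventually_ne hHp0] with x hx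
      field_simp
  have huniq : ∀ p ∈ Metric.ball (0 : Fin n → ℂ) ρ, p ≠ 0 → ∀ a b : (Fin n → ℂ) → ℂ,
      ContinuousAt a p → ContinuousAt b p → (∀ᶠ x in 𝓝 p, G x = H x * a x) →
      (∀ᶠ x in 𝓝 p, G x = H x * b x) → a p = b p := by
    intro p hp hp0 a b ha hb h1 h2
    obtain ⟨⟨⟨hGp, hHp⟩, hregp⟩, hzp⟩ := hball p hp
    have hfreq : ∃ᶠ x in 𝓝 p, H x ≠ 0 := by
      intro hcon
      obtain ⟨i, hi⟩ := hregp hp0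
      apply hi
      have : H =ᶠ[𝓝 p] fun _ => 0 := by
        filter_upwards [hcon] with x hx
        simpa using hx
      rw [this.fderiv_eq]; simp
    by_contra hne
    have h3 : ∀ᶠ x in 𝓝 p, a x - b x ≠ 0 := (ha.sub hb).eventually_ne (sub_ne_zero.2 hne)
    obtain ⟨x, hx, h4, h5, h6⟩ := (hfreq.and_eventually (h3.and (h1.and h2))).exists
    have : H x * (a x - b x) = 0 := by rw [mul_sub, ← h5, ← h6, sub_self]
    rcases mul_eq_zero.1 this with h | h
    · exact hx h
    · exact h4 h
  choose! q hq1 hq2 using hloc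
  have hqan : ∀ x ∈ Metric.ball (0 : Fin n → ℂ) ρ, x ≠ 0 → (fun y => q y y) =ᶠ[𝓝 x] q x := by
    intro p hp hp0
    filter_upwards [Metric.isOpen_ball.mem_nhds hp, isOpen_ne.mem_nhds hp0,
      (hq1 p hp hp0).eventually_analyticAt, (hq2 p hp hp0).eventually_nhds] with x h1 h2 h3 h4
    exact huniq x h1 h2 _ _ (hq1 x h1 h2).continuousAt h3.continuousAt (hq2 x h1 h2) h4
  have hqan2 : ∀ x ∈ Metric.ball (0 : Fin n → ℂ) ρ, x ≠ 0 → AnalyticAt ℂ (fun y => q y y) x :=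
    fun x hx hx0 => (hq1 x hx hx0).congr (hqan x hx hx0).symm
  let i : Fin n := ⟨0, by omega⟩
  let j : Fin n := ⟨1, by omega⟩
  have hij : j ≠ i := by simp [i, j]
  obtain ⟨Q, hQ, hQq⟩ := hartogs hρ i j hij hqan2
  rw [Ideal.mem_span_singleton]
  refine ⟨mkOn Q hQ, ?_⟩
  rw [← sub_eq_zero]
  apply coordG_regular j
  rw [mkOn_mul, mkOn_sub, coordG_eq, mkOn_mul, zero_On, mkOn_eq_iff]
  filter_upwards [hQq, Metric.ball_mem_nhds 0 hρ] with x h1 h2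
  by_cases hx : x j = 0
  · rw [hx, zero_mul]
  · have hx0 : x ≠ 0 := fun h => hx (by rw [h]; rfl)
    rw [h1 hx, (hq2 x h2 hx0).self_of_nhds]
    ring

end Hartogs

section Weights

variable {R : Type*} [CommRing R] [Algebra ℂ R]

/-- the shifted operator `D - l`. -/
def shD (D : Derivation ℂ R R) (l : ℂ) : R →ₗ[ℂ] R := D.toLinearMap - l • LinearMap.id

lemma shD_apply (D : Derivation ℂ R R) (l : ℂ) (a : R) : shD D l a = D a - l • a := by
  simp [shD]

/-- the elements of `A` that are generalised eigenvectors modulo `A'`. -/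
def WW (D : Derivation ℂ R R) (A A' : Ideal R) (S : Set ℂ) : Submodule ℂ R :=
  Submodule.span ℂ {a | a ∈ A ∧ ∃ l ∈ S, ∃ k : ℕ, ((shD D l) ^ k) a ∈ A'}

/-- the weights of `A / A'` lie in `S`. -/
def GG (D : Derivation ℂ R R) (A A' : Ideal R) (S : Set ℂ) : Prop :=
  A.restrictScalars ℂ ≤ A'.restrictScalars ℂ ⊔ WW D A A' S

lemma shD_stable {D : Derivation ℂ R R} {A : Ideal R} (h : ∀ a ∈ A, D a ∈ A) (l : ℂ) {a : R}
    (ha : a ∈ A) (k : ℕ) : ((shD D l) ^ k) a ∈ A := by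
  induction k with
  | zero => simpa using ha
  | succ k ih =>
    rw [pow_succ', Module.End.mul_apply, shD_apply]
    refine A.sub_mem (h _ ih) ?_
    rw [Algebra.smul_def]
    exact A.mul_mem_left _ ih

lemma GG_indep {D : Derivation ℂ R R} {A A' Q : Ideal R} {S : Set ℂ} (hQ : ∀ a ∈ Q, D a ∈ Q)
    (hA' : A' ≤ Q) (hG : GG D A A' S) {ν : ℂ} (hν : ν ∉ S) {x : R} (hx : x ∈ A)
    (hDx : D x - ν • x ∈ Q) : x ∈ Q := by
  let Q' : Submodule ℂ R := Q.restrictScalars ℂ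
  let T : Module.End ℂ (R ⧸ Q') := Q'.mapQ Q' D.toLinearMap (fun a ha => hQ a ha)
  have hT : ∀ a : R, T (Q'.mkQ a) = Q'.mkQ (D a) := fun a => rfl
  have hTk : ∀ (l : ℂ) (k : ℕ) (a : R),
      ((T - l • (1 : Module.End ℂ (R ⧸ Q'))) ^ k) (Q'.mkQ a) = Q'.mkQ (((shD D l) ^ k) a) := by
    intro l k
    induction k with
    | zero => intro a; rfl
    | succ k ih =>
      intro a
      rw [pow_succ, pow_succ, Module.End.mul_apply, Module.End.mul_apply, ← ih, shD_apply]
      congr 1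
  have hmem : ∀ (l : ℂ) (k : ℕ) (a : R), ((shD D l) ^ k) a ∈ Q →
      Q'.mkQ a ∈ T.maxGenEigenspace l := by
    intro l k a h
    rw [Module.End.mem_maxGenEigenspace]
    refine ⟨k, ?_⟩
    rw [hTk]
    simpa [Q'] using h
  have h1 : Q'.mkQ x ∈ T.maxGenEigenspace ν := by
    apply hmem ν 1
    rw [pow_one, shD_apply]; exact hDx
  have h2 : Q'.mkQ x ∈ ⨆ j, ⨆ (_ : j ≠ ν), T.maxGenEigenspace j := by
    have h3 := hG hx
    have h4 : (A'.restrictScalars ℂ ⊔ WW D A A' S) ≤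
        (⨆ j, ⨆ (_ : j ≠ ν), T.maxGenEigenspace j).comap Q'.mkQ := by
      refine sup_le ?_ (Submodule.span_le.2 ?_)
      · intro a ha
        have : Q'.mkQ a = 0 := by simpa [Q'] using hA' ha
        simp only [Submodule.mem_comap, this, Submodule.zero_mem]
      · rintro a ⟨ha, l, hl, k, hk⟩
        have hne : l ≠ ν := fun h => hν (h ▸ hl)
        exact (le_iSup₂_of_le (f := fun j (_ : j ≠ ν) => T.maxGenEigenspace j) l hne le_rfl)
          (hmem l k a (hA' hk))
    exact h4 h3
  have h5 := (Module.End.independent_maxGenEigenspace T ν)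
  have h6 := Submodule.disjoint_def.1 h5 _ h1 h2
  simpa [Q'] using h6

lemma GG_mono {D : Derivation ℂ R R} {A A' : Ideal R} {S S' : Set ℂ} (h : S ⊆ S')
    (hG : GG D A A' S) : GG D A A' S' := by
  refine hG.trans (sup_le_sup_left (Submodule.span_mono ?_) _)
  rintro a ⟨ha, l, hl, k, hk⟩
  exact ⟨ha, l, h hl, k, hk⟩

lemma stable_mul {D : Derivation ℂ R R} {A B : Ideal R} (hA : ∀ a ∈ A, D a ∈ A)
    (hB : ∀ a ∈ B, D a ∈ B) : ∀ a ∈ A * B, D a ∈ A * B := by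
  intro a ha
  refine Submodule.mul_induction_on ha ?_ ?_
  · intro x hx y hy
    rw [Derivation.leibniz]
    refine Ideal.add_mem _ ?_ ?_
    · exact Ideal.mul_mem_mul hx (hB y hy)
    · rw [smul_eq_mul, mul_comm y (D x)]; exact Ideal.mul_mem_mul (hA x hx) hy
  · intro x y hx hy
    rw [map_add]; exact Ideal.add_mem _ hx hy

lemma stable_pow {D : Derivation ℂ R R} {A : Ideal R} (hA : ∀ a ∈ A, D a ∈ A) (k : ℕ) :
    ∀ a ∈ A ^ k, D a ∈ A ^ k := by
  induction k with
  | zero => intro a _; simp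
  | succ k ih => rw [pow_succ]; exact stable_mul ih hA

lemma stable_sup {D : Derivation ℂ R R} {A B : Ideal R} (hA : ∀ a ∈ A, D a ∈ A)
    (hB : ∀ a ∈ B, D a ∈ B) : ∀ a ∈ A ⊔ B, D a ∈ A ⊔ B := by
  intro a ha
  obtain ⟨x, hx, y, hy, rfl⟩ := Submodule.mem_sup.1 ha
  rw [map_add]
  exact Submodule.add_mem_sup (hA x hx) (hB y hy)

lemma gen_mul {D : Derivation ℂ R R} {A A' B B' : Ideal R} (hA : ∀ a ∈ A, D a ∈ A)
    (hA' : ∀ a ∈ A', D a ∈ A') (hB : ∀ a ∈ B, D a ∈ B) (hB' : ∀ a ∈ B', D a ∈ B') (l l' : ℂ)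
    (N : ℕ) : ∀ (k k' : ℕ), k + k' = N → ∀ a ∈ A, ∀ b ∈ B, ((shD D l) ^ k) a ∈ A' →
      ((shD D l') ^ k') b ∈ B' → ((shD D (l + l')) ^ N) (a * b) ∈ A' * B ⊔ A * B' := by
  have hst := stable_sup (stable_mul hA' hB) (stable_mul hA hB')
  induction N with
  | zero =>
    intro k k' hk a ha b hb h1 h2
    obtain rfl : k = 0 := by omega
    exact Ideal.mem_sup_left (Ideal.mul_mem_mul h1 hb)
  | succ N ih =>
    intro k k' hk a ha b hb h1 h2
    rcases k with _ | k
    · exact shD_stable hst _ (Ideal.mem_sup_left (Ideal.mul_mem_mul h1 hb)) _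
    rcases k' with _ | k'
    · exact shD_stable hst _ (Ideal.mem_sup_right (Ideal.mul_mem_mul ha h2)) _
    have e : shD D (l + l') (a * b) = shD D l a * b + a * shD D l' b := by
      simp only [shD_apply, Derivation.leibniz, smul_eq_mul, Algebra.smul_def, map_add]
      ring
    rw [pow_succ, Module.End.mul_apply, e, map_add]
    refine Ideal.add_mem _ ?_ ?_
    · refine ih k (k' + 1) (by omega) _ ?_ b hb ?_ h2
      · simpa using shD_stable hA l ha 1
      · rwa [pow_succ, Module.End.mul_apply] at h1
    · refine ih (k + 1) k' (by omega) a ha _ ?_ h1 ?_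
      · simpa using shD_stable hB l' hb 1
      · rwa [pow_succ, Module.End.mul_apply] at h2

lemma GG_mul_aux {D : Derivation ℂ R R} {A A' B B' : Ideal R} {S S' U : Set ℂ}
    (hA : ∀ a ∈ A, D a ∈ A)
    (hA' : ∀ a ∈ A', D a ∈ A') (hB : ∀ a ∈ B, D a ∈ B) (hB' : ∀ a ∈ B', D a ∈ B')
    (hG : GG D A A' S) (hG' : GG D B B' S') (hU : ∀ s ∈ S, ∀ t ∈ S', s + t ∈ U)
    (T : Submodule ℂ R) (hT1 : ∀ z ∈ A' * B ⊔ A * B', z ∈ T)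
    (hT2 : ∀ z ∈ A * B, ∀ l ∈ U, ∀ k : ℕ, ((shD D l) ^ k) z ∈ A' * B ⊔ A * B' → z ∈ T) :
    ∀ a ∈ A, ∀ b ∈ B, a * b ∈ T := by
  intro a ha b hb
  have ha' : a ∈ A'.restrictScalars ℂ ⊔ WW D A A' S := hG ha
  have hb' : b ∈ B'.restrictScalars ℂ ⊔ WW D B B' S' := hG' hb
  have h1 : A'.restrictScalars ℂ ⊔ WW D A A' S ≤ T.comap (LinearMap.mulRight ℂ b) := by
    refine sup_le ?_ (Submodule.span_le.2 ?_)
    · intro x hx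
      exact hT1 _ (Ideal.mem_sup_left (Ideal.mul_mem_mul hx hb))
    · rintro x ⟨hx, l, hl, k, hk⟩
      have h2 : B'.restrictScalars ℂ ⊔ WW D B B' S' ≤ T.comap (LinearMap.mulLeft ℂ x) := by
        refine sup_le ?_ (Submodule.span_le.2 ?_)
        · intro y hy
          exact hT1 _ (Ideal.mem_sup_right (Ideal.mul_mem_mul hx hy))
        · rintro y ⟨hy, l', hl', k', hk'⟩
          exact hT2 (x * y) (Ideal.mul_mem_mul hx hy) (l + l') (hU l hl l' hl') (k + k')
            (gen_mul hA hA' hB hB' l l' _ k k' rfl x hx y hy hk hk')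
      exact h2 hb'
  exact h1 ha'

lemma GG_mul {D : Derivation ℂ R R} {A A' B B' : Ideal R} {S S' U : Set ℂ}
    (hA : ∀ a ∈ A, D a ∈ A)
    (hA' : ∀ a ∈ A', D a ∈ A') (hB : ∀ a ∈ B, D a ∈ B) (hB' : ∀ a ∈ B', D a ∈ B')
    (hG : GG D A A' S) (hG' : GG D B B' S') (hU : ∀ s ∈ S, ∀ t ∈ S', s + t ∈ U) :
    GG D (A * B) (A' * B ⊔ A * B') U := by
  have key := GG_mul_aux hA hA' hB hB' hG hG' hU
    ((A' * B ⊔ A * B').restrictScalars ℂ ⊔ WW D (A * B) (A' * B ⊔ A * B') U)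
    (fun z hz => Submodule.mem_sup_left hz)
    (fun z hz l hl k hk => Submodule.mem_sup_right (Submodule.subset_span ⟨hz, l, hl, k, hk⟩))
  unfold GG
  generalize ((A' * B ⊔ A * B').restrictScalars ℂ ⊔ WW D (A * B) (A' * B ⊔ A * B') U) = T at *
  intro z hz
  have hz' : z ∈ A * B := hz
  refine Submodule.mul_induction_on hz' key ?_
  intro x y hx hy
  exact T.add_mem hx hy

lemma GG_fin {D : Derivation ℂ R R} {A A' : Ideal R} {S : Set ℂ} (hA' : ∀ a ∈ A', D a ∈ A')
    {V : Type*} [AddCommGroup V] [Module ℂ V] [FiniteDimensional ℂ V] (T : Module.End ℂ V)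
    (Φ : V →ₗ[ℂ] R) (hΦ : ∀ v, D (Φ v) - Φ (T v) ∈ A') (hΦA : ∀ v, Φ v ∈ A)
    (hgen : ∀ a ∈ A, ∃ v, a - Φ v ∈ A') (hS : ∀ l v, v ≠ 0 → T v = l • v → l ∈ S) :
    GG D A A' S := by
  have hpow : ∀ (l : ℂ) (k : ℕ) (v : V),
      ((shD D l) ^ k) (Φ v) - Φ (((T - l • (1 : Module.End ℂ V)) ^ k) v) ∈ A' := by
    intro l k
    induction k with
    | zero => intro v; simp
    | succ k ih =>
      intro v
      rw [pow_succ, pow_succ, Module.End.mul_apply, Module.End.mul_apply]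
      have h1 := ih ((T - l • (1 : Module.End ℂ V)) v)
      have h2 : shD D l (Φ v) - Φ ((T - l • (1 : Module.End ℂ V)) v) ∈ A' := by
        have : shD D l (Φ v) - Φ ((T - l • (1 : Module.End ℂ V)) v) = D (Φ v) - Φ (T v) := by
          simp [shD_apply]
        rw [this]; exact hΦ v
      have h3 := A'.add_mem (shD_stable hA' l h2 k) h1
      rw [map_sub] at h3
      simpa using h3
  intro a ha
  obtain ⟨v, hv⟩ := hgen a ha
  have hv2 : v ∈ ⨆ l, T.maxGenEigenspace l := by
    rw [Module.End.iSup_maxGenEigenspace_eq_top]; trivial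
  have h1 : ⨆ l, T.maxGenEigenspace l ≤ (WW D A A' S).comap Φ := by
    refine iSup_le ?_
    intro l u hu
    by_cases hu0 : u = 0
    · simp [hu0]
    rw [Module.End.mem_maxGenEigenspace] at hu
    obtain ⟨k, hk⟩ := hu
    refine Submodule.subset_span ⟨hΦA u, l, ?_, k, ?_⟩
    · have h3 : T.HasEigenvalue l := by
        apply Module.End.hasEigenvalue_of_hasGenEigenvalue (k := k)
        intro h4
        apply hu0
        have : u ∈ T.genEigenspace l k := by
          rw [Module.End.mem_genEigenspace_nat]; exact hk
        rw [h4] at this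
        simpa using this
      obtain ⟨w, hw⟩ := h3.exists_hasEigenvector
      exact hS l w hw.2 hw.apply_eq_smul
    · have := hpow l k u
      rw [hk] at this
      simpa using this
  have h2 : a = (a - Φ v) + Φ v := by ring
  rw [h2]
  exact Submodule.add_mem_sup (S := A'.restrictScalars ℂ) hv (h1 hv2)

lemma GG_pow {D : Derivation ℂ R R} {m : Ideal R} {M : ℝ} (hm : ∀ a ∈ m, D a ∈ m)
    (h0 : ∀ r : R, ∃ c : ℂ, r - algebraMap ℂ R c ∈ m)
    (hG : GG D m (m ^ 2) {z | z.re ≤ M}) (a : ℕ) :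
    GG D (m ^ a) (m ^ (a + 1)) {z | z.re ≤ a * M} := by
  induction a with
  | zero =>
    have : GG D (m ^ 0) (m ^ (0 + 1)) {0} := by
      intro r _
      obtain ⟨c, hc⟩ := h0 r
      have h2 : r = (r - algebraMap ℂ R c) + algebraMap ℂ R c := by ring
      rw [h2]
      refine Submodule.add_mem_sup (S := (m ^ (0 + 1)).restrictScalars ℂ) (by simpa using hc) ?_
      refine Submodule.subset_span ⟨by simp, 0, rfl, 1, ?_⟩
      simp [shD_apply]
    refine GG_mono ?_ this
    intro z hz
    simp only [Set.mem_singleton_iff] at hz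
    simp [hz]
  | succ a ih =>
    have := GG_mul (U := {z : ℂ | z.re ≤ ((a + 1 : ℕ) : ℝ) * M}) (stable_pow hm a)
      (stable_pow hm (a + 1)) hm (stable_pow hm 2) ih hG ?_
    · have e1 : m ^ (a + 1) * m ⊔ m ^ a * m ^ 2 = m ^ (a + 1 + 1) := by
        rw [← pow_succ, ← pow_add, sup_idem]
      rw [e1, ← pow_succ] at this
      exact this
    · intro s hs t ht
      simp only [Set.mem_ofPred_eq, Complex.add_re] at *
      push_cast
      linarith

lemma Q_gen {D : Derivation ℂ R R} {m I : Ideal R} {M : ℝ} (hm : ∀ a ∈ m, D a ∈ m)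
    (hI : ∀ a ∈ I, D a ∈ I) (hIm : I ≤ m)
    (h0 : ∀ r : R, ∃ c : ℂ, r - algebraMap ℂ R c ∈ m)
    (hG : GG D m (m ^ 2) {z | z.re ≤ M}) (hGI : GG D I (m * I) {z | z.re < M})
    (hM : 0 < M) {w : ℂ} (hw : w.re = M) {x : R} (hx : x ∈ m) (hDx : D x - w • x ∈ m ^ 2)
    {K : ℕ} (hK : m ^ K ≤ I) (hxK : x ^ K ∉ m ^ (K + 1)) : False := by
  have hDxK : D (x ^ K) - ((K : ℂ) * w) • x ^ K ∈ m ^ (K + 1) := by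
    rcases K with _ | K
    · simp
    have e : D (x ^ (K + 1)) - (((K + 1 : ℕ) : ℂ) * w) • x ^ (K + 1) =
        ((K + 1 : ℕ) : R) * (x ^ K * (D x - w • x)) := by
      rw [Derivation.leibniz_pow, nsmul_eq_mul, smul_eq_mul, Nat.add_sub_cancel,
        Algebra.smul_def, Algebra.smul_def, map_mul, map_natCast]
      ring
    rw [e]
    refine Ideal.mul_mem_left _ _ ?_
    have : m ^ (K + 1 + 1) = m ^ K * m ^ 2 := by rw [← pow_add]
    rw [this]
    exact Ideal.mul_mem_mul (Ideal.pow_mem_pow hx K) hDx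
  have key : ∀ a, a ≤ K → x ^ K ∈ m ^ a * I ⊔ m ^ (K + 1) := by
    intro a
    induction a with
    | zero =>
      intro _
      rw [pow_zero, Ideal.one_eq_top, Ideal.top_mul]
      exact Ideal.mem_sup_left (hK (Ideal.pow_mem_pow hx K))
    | succ a ih =>
      intro ha
      obtain ⟨y, hy, z, hz, hyz⟩ := Submodule.mem_sup.1 (ih (by omega))
      have hGa := GG_mul (U := {z : ℂ | z.re < ((a + 1 : ℕ) : ℝ) * M}) (stable_pow hm a)
        (stable_pow hm (a + 1)) hI (stable_mul hm hI) (GG_pow hm h0 hG a) hGI ?_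
      swap
      · intro s hs t ht
        simp only [Set.mem_ofPred_eq, Complex.add_re] at *
        push_cast
        linarith
      have e1 : m ^ (a + 1) * I ⊔ m ^ a * (m * I) = m ^ (a + 1) * I := by
        rw [← mul_assoc, ← pow_succ, sup_idem]
      rw [e1] at hGa
      have hst := stable_sup (stable_mul (stable_pow hm (a + 1)) hI) (stable_pow hm (K + 1))
      have hy' : y ∈ m ^ (a + 1) * I ⊔ m ^ (K + 1) := by
        refine GG_indep hst le_sup_left hGa (ν := (K : ℂ) * w) ?_ hy ?_
        · simp only [Set.mem_ofPred_eq, not_lt, Complex.mul_re, Complex.natCast_re,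
            Complex.natCast_im, zero_mul, sub_zero, hw]
          have : ((a + 1 : ℕ) : ℝ) ≤ K := by exact_mod_cast ha
          exact mul_le_mul_of_nonneg_right this hM.le
        · refine Ideal.mem_sup_right ?_
          have hyx : y = x ^ K - z := by rw [← hyz]; ring
          have : D y - ((K : ℂ) * w) • y = (D (x ^ K) - ((K : ℂ) * w) • x ^ K) -
              (D z - ((K : ℂ) * w) • z) := by
            rw [hyx, map_sub, smul_sub]; ring
          rw [this]
          refine Ideal.sub_mem _ hDxK ?_
          have := shD_stable (stable_pow hm (K + 1)) ((K : ℂ) * w) hz 1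
          rwa [pow_one, shD_apply] at this
      rw [← hyz]
      exact Ideal.add_mem _ hy' (Ideal.mem_sup_right hz)
  have h1 := key K le_rfl
  apply hxK
  have h2 : m ^ K * I ⊔ m ^ (K + 1) ≤ m ^ (K + 1) := by
    refine sup_le ?_ le_rfl
    rw [pow_succ]
    exact Ideal.mul_mono_right hIm
  exact h2 h1

lemma order_gen {D : Derivation ℂ R R} {m : Ideal R} {M : ℝ} (hm : ∀ a ∈ m, D a ∈ m)
    (h0 : ∀ r : R, ∃ c : ℂ, r - algebraMap ℂ R c ∈ m)
    (hG : GG D m (m ^ 2) {z | z.re ≤ M}) {f : R} (hf : D f = f) {a : ℕ} (hfa : f ∈ m ^ a)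
    (hfa' : f ∉ m ^ (a + 1)) : 1 ≤ a * M := by
  by_contra hcon
  apply hfa'
  refine GG_indep (stable_pow hm (a + 1)) le_rfl (GG_pow hm h0 hG a) (ν := 1) ?_ hfa ?_
  · simpa using hcon
  · simp [hf]

end Weights

section KeyLemma

/-- the derivation attached to a vector field. -/
def vfD (δ : Fin n → On n) : Derivation ℂ (On n) (On n) := ∑ i, δ i • pdD i

lemma vfD_apply (δ : Fin n → On n) (g : On n) : vfD δ g = applyVF δ g := by
  simp only [vfD, applyVF]
  have := map_sum (Derivation.coeFnAddMonoidHom (R := ℂ) (A := On n) (M := On n))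
    (fun i => δ i • pdD i) Finset.univ
  have h2 := congrFun this g
  rw [Finset.sum_apply] at h2
  exact h2

lemma vfD_coord (δ : Fin n → On n) (i : Fin n) : vfD δ (coordG i) = δ i := by
  rw [vfD_apply, applyVF]
  simp [pd_coordG]

lemma pd_sum {ι : Type*} (s : Finset ι) (i : Fin n) (F : ι → On n) :
    pd i (∑ j ∈ s, F j) = ∑ j ∈ s, pd i (F j) := by
  have := map_sum (pdD i) F s
  exact this

lemma vfD_pd (δ : Fin n → On n) (g : On n) (i : Fin n) :
    vfD δ (pd i g) = pd i (vfD δ g) - ∑ j, pd i (δ j) * pd j g := by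
  simp only [vfD_apply, applyVF]
  rw [pd_sum, ← Finset.sum_sub_distrib]
  refine Finset.sum_congr rfl fun j _ => ?_
  rw [pd_mul, pd_comm i j]
  ring

lemma stable_of_gen {R : Type*} [CommRing R] [Algebra ℂ R] (D : Derivation ℂ R R) (s : Set R)
    (h : ∀ a ∈ s, D a ∈ Ideal.span s) : ∀ a ∈ Ideal.span s, D a ∈ Ideal.span s := by
  intro a ha
  induction ha using Submodule.span_induction with
  | mem x hx => exact h x hx
  | zero => simp
  | add x y _ _ hx hy => rw [map_add]; exact Ideal.add_mem _ hx hy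
  | smul r x hx' hx =>
    rw [smul_eq_mul, Derivation.leibniz, smul_eq_mul, smul_eq_mul]
    exact Ideal.add_mem _ (Ideal.mul_mem_left _ _ hx) (Ideal.mul_mem_right _ _ hx')

/-- the Tjurina ideal. -/
def TjI (g : On n) : Ideal (On n) := Ideal.span (insert g (Set.range fun i => pd i g))

lemma self_mem_TjI (g : On n) : g ∈ TjI g := Ideal.subset_span (Set.mem_insert _ _)

lemma pd_mem_TjI (g : On n) (i : Fin n) : pd i g ∈ TjI g :=
  Ideal.subset_span (Set.mem_insert_of_mem _ ⟨i, rfl⟩)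

lemma Jac_le_TjI (g : On n) : Jac n g ≤ TjI g := Ideal.span_mono (Set.subset_insert _ _)

lemma vfD_pd' {δ : Fin n → On n} {g u : On n} (hg : vfD δ g = u * g) (i : Fin n) :
    vfD δ (pd i g) = u * pd i g + g * pd i u - ∑ j, pd i (δ j) * pd j g := by
  rw [vfD_pd, hg, pd_mul]

lemma TjI_stable {δ : Fin n → On n} {g u : On n} (hg : vfD δ g = u * g) :
    ∀ a ∈ TjI g, vfD δ a ∈ TjI g := by
  apply stable_of_gen
  rintro a (rfl | ⟨i, rfl⟩)
  · rw [hg]; exact Ideal.mul_mem_left _ _ (self_mem_TjI _)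
  · show vfD δ (pd i g) ∈ TjI g
    rw [vfD_pd' hg]
    refine Ideal.sub_mem _ (Ideal.add_mem _ (Ideal.mul_mem_left _ _ (pd_mem_TjI g i))
      (Ideal.mul_mem_right _ _ (self_mem_TjI g))) (Ideal.sum_mem _ fun j _ =>
        Ideal.mul_mem_left _ _ (pd_mem_TjI g j))

lemma TjI_le {g : On n} (hg : g ∈ mId n ^ 2) : TjI g ≤ mId n := by
  refine Ideal.span_le.2 ?_
  rintro a (rfl | ⟨i, rfl⟩)
  · exact Ideal.pow_le_self (by norm_num) hg
  · have := pd_mem_pow i 1 hg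
    simpa using this

lemma delta_mem {δ : Fin n → On n} {I : Ideal (On n)} (hI : ∀ a ∈ I, vfD δ a ∈ I)
    (hIm : I ≤ mId n) {K : ℕ} (hK : mId n ^ K ≤ I) (i : Fin n) : δ i ∈ mId n := by
  classical
  by_contra hcon
  have hu := isUnit_On' hcon
  have hex : ∃ k, coordG i ^ k ∈ I := ⟨K, hK (Ideal.pow_mem_pow (coordG_mem i) K)⟩
  have h1 := Nat.find_spec hex
  have hmin := fun k (hk : k < Nat.find hex) => Nat.find_min hex hk
  generalize Nat.find hex = k at h1 hmin
  rcases k with _ | k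
  · rw [pow_zero] at h1
    exact mId_ne_top ((Ideal.eq_top_iff_one _).2 (hIm h1))
  · apply hmin k (by omega)
    have h2 := hI _ h1
    rw [Derivation.leibniz_pow, nsmul_eq_mul, smul_eq_mul, Nat.add_sub_cancel, vfD_coord] at h2
    have h3 : IsUnit (((k + 1 : ℕ) : On n)) := by
      have : ((k + 1 : ℕ) : On n) = algebraMap ℂ (On n) ((k + 1 : ℕ) : ℂ) := by
        rw [map_natCast]
      rw [this]
      exact (isUnit_iff_ne_zero.2 (by exact_mod_cast Nat.succ_ne_zero k)).map _
    rw [Ideal.unit_mul_mem_iff_mem _ h3, Ideal.mul_unit_mem_iff_mem _ hu] at h2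
    exact h2

lemma vfD_mId {δ : Fin n → On n} (hδ : ∀ i, δ i ∈ mId n) : ∀ a ∈ mId n, vfD δ a ∈ mId n := by
  intro a _
  rw [vfD_apply, applyVF]
  exact Ideal.sum_mem _ fun i _ => Ideal.mul_mem_right _ _ (hδ i)

lemma sub_ev_mem (r : On n) : r - algebraMap ℂ (On n) (evH r) ∈ mId n := by
  rw [mem_mId, map_sub, AlgHom.commutes]
  simp

lemma first_order {g : On n} (hg : g ∈ mId n) :
    g - ∑ i, evH (pd i g) • coordG i ∈ mId n ^ 2 := by
  have h1 := hg
  rw [mId_eq_span, Ideal.mem_span_range_iff_exists_fun] at h1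
  obtain ⟨c, hc⟩ := h1
  have h2 : ∀ j, evH (pd j g) = evH (c j) := by
    intro j
    rw [← hc, pd_sum, map_sum]
    rw [Finset.sum_eq_single j]
    · rw [pd_mul, pd_coordG, map_add, map_mul, map_mul, (mem_mId).1 (coordG_mem j)]
      simp
    · intro b _ hb
      rw [pd_mul, pd_coordG, if_neg (Ne.symm hb), map_add, map_mul, map_mul,
        (mem_mId).1 (coordG_mem b)]
      simp
    · simp
  have h3 : g - ∑ i, evH (pd i g) • coordG i =
      ∑ i, (c i - algebraMap ℂ (On n) (evH (c i))) * coordG i := by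
    simp only [h2]
    rw [← hc, ← Finset.sum_sub_distrib]
    refine Finset.sum_congr rfl fun j _ => ?_
    rw [Algebra.smul_def]; ring
  rw [h3, pow_two]
  exact Ideal.sum_mem _ fun i _ => Ideal.mul_mem_mul (sub_ev_mem _) (coordG_mem i)

/-- `l` is an eigenvalue of `B`. -/
def EV (B : Matrix (Fin n) (Fin n) ℂ) (l : ℂ) : Prop := ∃ v, v ≠ 0 ∧ B.mulVec v = l • v

lemma EV_of_vecMul {B : Matrix (Fin n) (Fin n) ℂ} {l : ℂ} {v : Fin n → ℂ} (hv : v ≠ 0)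
    (h : Matrix.vecMul v B = l • v) : EV B l := by
  have h1 : ∃ v, v ≠ 0 ∧ Matrix.vecMul v (B - l • (1 : Matrix (Fin n) (Fin n) ℂ)) = 0 :=
    ⟨v, hv, by rw [Matrix.vecMul_sub, h, Matrix.vecMul_smul, Matrix.vecMul_one, sub_self]⟩
  rw [Matrix.exists_vecMul_eq_zero_iff, ← Matrix.exists_mulVec_eq_zero_iff] at h1
  obtain ⟨w, hw, h2⟩ := h1
  refine ⟨w, hw, ?_⟩
  rwa [Matrix.sub_mulVec, Matrix.smul_mulVec, Matrix.one_mulVec, sub_eq_zero] at h2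

lemma vfD_linF {δ : Fin n → On n} (hδ : ∀ i, δ i ∈ mId n) (v : Fin n → ℂ) :
    vfD δ (linF v) - linF ((linPart δ).mulVec v) ∈ mId n ^ 2 := by
  have h : vfD δ (linF v) - linF ((linPart δ).mulVec v) =
      ∑ j, v j • (δ j - ∑ i, evH (pd i (δ j)) • coordG i) := by
    simp only [linF, map_sum, Derivation.map_smul, vfD_coord, smul_sub, Finset.sum_sub_distrib]
    congr 1
    simp only [Finset.smul_sum, Matrix.mulVec, dotProduct, Finset.sum_smul]
    rw [Finset.sum_comm]
    refine Finset.sum_congr rfl fun j _ => Finset.sum_congr rfl fun i _ => ?_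
    rw [smul_smul, mul_comm]; rfl
  rw [h]
  refine Ideal.sum_mem _ fun j _ => ?_
  rw [Algebra.smul_def]
  exact Ideal.mul_mem_left _ _ (first_order (hδ j))

lemma GG_m {δ : Fin n → On n} (hδ : ∀ i, δ i ∈ mId n) {S : Set ℂ}
    (hS : ∀ l, EV (linPart δ) l → l ∈ S) : GG (vfD δ) (mId n) (mId n ^ 2) S := by
  let Φ : (Fin n → ℂ) →ₗ[ℂ] On n :=
    { toFun := linF
      map_add' := fun v w => by simp [linF, add_smul, Finset.sum_add_distrib]
      map_smul' := fun c v => by simp [linF, Finset.smul_sum, smul_smul] }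
  refine GG_fin (stable_pow (vfD_mId hδ) 2) (Matrix.toLin' (linPart δ)) Φ ?_ ?_ ?_ ?_
  · intro v
    rw [Matrix.toLin'_apply]
    exact vfD_linF hδ v
  · exact linF_mem
  · intro a ha
    exact ⟨fun i => evH (pd i a), first_order ha⟩
  · intro l v hv h
    rw [Matrix.toLin'_apply] at h
    exact hS l ⟨v, hv, h⟩

/-- the action on the generators of the Tjurina ideal. -/
def TjT (c : ℂ) (d : Fin n → ℂ) (B : Matrix (Fin n) (Fin n) ℂ) :
    (ℂ × (Fin n → ℂ)) →ₗ[ℂ] (ℂ × (Fin n → ℂ)) where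
  toFun p := (c * p.1 + ∑ i, p.2 i * d i, c • p.2 - Matrix.vecMul p.2 B)
  map_add' p q := by
    ext
    · simp [mul_add, add_mul, Finset.sum_add_distrib]; ring
    · simp [Matrix.add_vecMul, mul_add]; ring
  map_smul' r p := by
    ext
    · simp [mul_add, Finset.mul_sum, mul_assoc]; ring
    · simp [Matrix.smul_vecMul, mul_sub]; ring

/-- the generators of the Tjurina ideal. -/
def TjPhi (g : On n) : (ℂ × (Fin n → ℂ)) →ₗ[ℂ] On n where
  toFun p := p.1 • g + ∑ i, p.2 i • pd i g
  map_add' p q := by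
    simp only [Prod.fst_add, Prod.snd_add, Pi.add_apply, add_smul, Finset.sum_add_distrib]
    abel
  map_smul' r p := by
    simp only [Prod.smul_fst, Prod.smul_snd, Pi.smul_apply, smul_eq_mul, smul_add,
      Finset.smul_sum, smul_smul, RingHom.id_apply]

lemma TjPhi_T {δ : Fin n → On n} {g u : On n} (hg : vfD δ g = u * g) (p : ℂ × (Fin n → ℂ)) :
    vfD δ (TjPhi g p) - TjPhi g (TjT (evH u) (fun i => evH (pd i u)) (linPart δ) p) ∈
      mId n * TjI g := by
  set κ : On n → On n := fun r => r - algebraMap ℂ (On n) (evH r) with hκ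
  have hr : ∀ r, r = κ r + algebraMap ℂ (On n) (evH r) := fun r => by simp [hκ]
  have e : vfD δ (TjPhi g p) - TjPhi g (TjT (evH u) (fun i => evH (pd i u)) (linPart δ) p) =
      p.1 • (κ u * g) + ∑ i, p.2 i • (κ u * pd i g + κ (pd i u) * g -
        ∑ j, κ (pd i (δ j)) * pd j g) := by
    have h1 : vfD δ (TjPhi g p) = p.1 • (u * g) + ∑ i, p.2 i •
        (u * pd i g + g * pd i u - ∑ j, pd i (δ j) * pd j g) := by
      simp only [TjPhi, LinearMap.coe_mk, AddHom.coe_mk, map_add, map_sum, Derivation.map_smul,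
        hg, vfD_pd' hg]
    have h2 : TjPhi g (TjT (evH u) (fun i => evH (pd i u)) (linPart δ) p) =
        p.1 • (evH u • g) + ∑ i, p.2 i •
        (evH u • pd i g + evH (pd i u) • g - ∑ j, evH (pd i (δ j)) • pd j g) := by
      simp only [TjPhi, TjT, LinearMap.coe_mk, AddHom.coe_mk, Pi.sub_apply, Pi.smul_apply,
        add_smul, sub_smul, smul_add, smul_sub, Finset.sum_add_distrib, Finset.sum_sub_distrib,
        Finset.sum_smul, smul_smul, smul_eq_mul, Finset.smul_sum]
      have h3 : ∑ x, Matrix.vecMul p.2 (linPart δ) x • pd x g =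
          ∑ x, ∑ j, (p.2 x * evH (pd x (δ j))) • pd j g := by
        rw [Finset.sum_comm]
        refine Finset.sum_congr rfl fun x _ => ?_
        rw [Matrix.vecMul, dotProduct, Finset.sum_smul]
        rfl
      rw [h3]
      simp only [mul_comm (evH u)]
      abel
    rw [h1, h2, add_sub_add_comm, ← Finset.sum_sub_distrib]
    congr 1
    · simp only [hκ, Algebra.smul_def]; ring
    · refine Finset.sum_congr rfl fun i _ => ?_
      simp only [hκ, sub_mul, Finset.sum_sub_distrib, Algebra.smul_def]
      ring
  rw [e]
  have hκm : ∀ r, κ r ∈ mId n := sub_ev_mem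
  have hs : ∀ (c : ℂ) (a : On n), a ∈ mId n * TjI g → c • a ∈ mId n * TjI g := by
    intro c a ha
    rw [Algebra.smul_def]; exact Ideal.mul_mem_left _ _ ha
  refine Ideal.add_mem _ (hs _ _ (Ideal.mul_mem_mul (hκm _) (self_mem_TjI g)))
    (Ideal.sum_mem _ fun i _ => hs _ _ ?_)
  refine Ideal.sub_mem _ (Ideal.add_mem _ (Ideal.mul_mem_mul (hκm _) (pd_mem_TjI g i))
    (Ideal.mul_mem_mul (hκm _) (self_mem_TjI g))) (Ideal.sum_mem _ fun j _ => ?_)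
  exact Ideal.mul_mem_mul (hκm _) (pd_mem_TjI g j)

lemma GG_I {δ : Fin n → On n} (hδ : ∀ i, δ i ∈ mId n) {g u : On n} (hg : vfD δ g = u * g)
    {S : Set ℂ} (hS1 : evH u ∈ S) (hS : ∀ l, EV (linPart δ) l → evH u - l ∈ S) :
    GG (vfD δ) (TjI g) (mId n * TjI g) S := by
  refine GG_fin (stable_mul (vfD_mId hδ) (TjI_stable hg))
    (TjT (evH u) (fun i => evH (pd i u)) (linPart δ)) (TjPhi g) (TjPhi_T hg) ?_ ?_ ?_
  · intro p
    simp only [TjPhi, LinearMap.coe_mk, AddHom.coe_mk, Algebra.smul_def]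
    exact Ideal.add_mem _ (Ideal.mul_mem_left _ _ (self_mem_TjI g))
      (Ideal.sum_mem _ fun j _ => Ideal.mul_mem_left _ _ (pd_mem_TjI g j))
  · intro a ha
    rw [TjI, Ideal.mem_span_insert] at ha
    obtain ⟨s, z, hz, rfl⟩ := ha
    rw [Ideal.mem_span_range_iff_exists_fun] at hz
    obtain ⟨c, rfl⟩ := hz
    refine ⟨(evH s, fun i => evH (c i)), ?_⟩
    have e : s * g + ∑ i, c i * pd i g - TjPhi g (evH s, fun i => evH (c i)) =
        (s - algebraMap ℂ (On n) (evH s)) * g +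
          ∑ i, (c i - algebraMap ℂ (On n) (evH (c i))) * pd i g := by
      simp only [TjPhi, LinearMap.coe_mk, AddHom.coe_mk, Algebra.smul_def, sub_mul,
        Finset.sum_sub_distrib]
      ring
    rw [e]
    exact Ideal.add_mem _ (Ideal.mul_mem_mul (sub_ev_mem _) (self_mem_TjI g))
      (Ideal.sum_mem _ fun i _ => Ideal.mul_mem_mul (sub_ev_mem _) (pd_mem_TjI g i))
  · rintro l ⟨s, v⟩ hne h
    simp only [TjT, LinearMap.coe_mk, AddHom.coe_mk, Prod.smul_mk, Prod.mk.injEq] at h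
    obtain ⟨h1, h2⟩ := h
    by_cases hv : v = 0
    · subst hv
      have hs : s ≠ 0 := fun h => hne (by simp [h])
      simp only [Pi.zero_apply, zero_mul, Finset.sum_const_zero, add_zero, smul_eq_mul] at h1
      rw [← mul_right_cancel₀ hs h1]
      exact hS1
    · have h3 : Matrix.vecMul v (linPart δ) = (evH u - l) • v := by
        rw [sub_smul, ← h2]; abel
      have := hS _ (EV_of_vecMul hv h3)
      simpa using this

lemma Q_lem {δ : Fin n → On n} (hδ : ∀ i, δ i ∈ mId n) {g u : On n} (hg : vfD δ g = u * g)
    (hg2 : g ∈ mId n ^ 2) (hfin : FiniteDimensional ℂ (On n ⧸ Jac n g)) {w : ℂ}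
    (hw : EV (linPart δ) w) (hmax : ∀ l, EV (linPart δ) l → l.re ≤ w.re) (hpos : 0 < w.re) :
    w.re ≤ (evH u).re ∨ ∃ l, EV (linPart δ) l ∧ w.re ≤ (evH u - l).re := by
  by_contra! hcon
  obtain ⟨K, hK⟩ := exists_mId_pow_le hfin
  obtain ⟨v, hv, hBv⟩ := hw
  refine Q_gen (D := vfD δ) (m := mId n) (I := TjI g) (M := w.re) (w := w) (x := linF v) (K := K)
    (vfD_mId hδ) (TjI_stable hg) (TjI_le hg2) (fun r => ⟨evH r, sub_ev_mem r⟩)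
    (GG_m hδ hmax) (GG_I hδ hg hcon.1 hcon.2) hpos rfl (linF_mem v) ?_
    (hK.trans (Jac_le_TjI g)) (linF_pow_not_mem hv K)
  have h1 := vfD_linF hδ v
  have h2 : linF ((linPart δ).mulVec v) = w • linF v := by
    rw [hBv]; simp [linF, Finset.smul_sum, smul_smul]
  rwa [h2] at h1

lemma EV_neg {δ : Fin n → On n} {l : ℂ} : EV (linPart (-δ)) l ↔ EV (linPart δ) (-l) := by
  have h : linPart (-δ) = - linPart δ := by
    ext i j
    show evH (pd i (-δ j)) = - evH (pd i (δ j))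
    rw [← map_neg, ← pdD_apply, ← pdD_apply, map_neg]
  unfold EV
  rw [h]
  refine exists_congr fun v => and_congr_right fun _ => ?_
  rw [Matrix.neg_mulVec, neg_smul, neg_eq_iff_eq_neg]

lemma EV_fin (B : Matrix (Fin n) (Fin n) ℂ) : {l | EV B l}.Finite := by
  refine (Module.End.finite_hasEigenvalue (Matrix.toLin' B)).subset ?_
  rintro l ⟨v, hv, h⟩
  exact Module.End.hasEigenvalue_of_hasEigenvector (x := v)
    ⟨Module.End.mem_eigenspace_iff.2 (by rw [Matrix.toLin'_apply, h]), hv⟩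

lemma EV_nonempty [NeZero n] (B : Matrix (Fin n) (Fin n) ℂ) : {l | EV B l}.Nonempty := by
  obtain ⟨l, hl⟩ := Module.End.exists_eigenvalue (Matrix.toLin' B)
  obtain ⟨v, hv⟩ := hl.exists_hasEigenvector
  refine ⟨l, v, hv.2, ?_⟩
  rw [← Matrix.toLin'_apply]; exact hv.apply_eq_smul

theorem key_lemma [NeZero n] {δ : Fin n → On n} {f h b : On n}
    (hf : applyVF δ f = f) (hh : applyVF δ h = b * h)
    (hf2 : f ∈ mId n ^ 2) (hh2 : h ∈ mId n ^ 2)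
    (hffin : FiniteDimensional ℂ (On n ⧸ Jac n f))
    (hhfin : FiniteDimensional ℂ (On n ⧸ Jac n h)) : IsUnit b := by
  apply isUnit_On'
  intro hb
  rw [← vfD_apply] at hf hh
  have hf' : vfD δ f = 1 * f := by rw [hf, one_mul]
  obtain ⟨K, hK⟩ := exists_mId_pow_le hffin
  have hδ : ∀ i, δ i ∈ mId n :=
    delta_mem (TjI_stable hf') (TjI_le hf2) (hK.trans (Jac_le_TjI f))
  obtain ⟨w, hw, hmax⟩ := Set.exists_max_image _ Complex.re (EV_fin (linPart δ)) (EV_nonempty _)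
  obtain ⟨w₀, hw₀, hmin⟩ := Set.exists_min_image _ Complex.re (EV_fin (linPart δ)) (EV_nonempty _)
  have hpos : 0 < w.re := by
    classical
    have hex := exists_not_mem_pow hffin
    have h1 := Nat.find_spec hex
    have hmn := fun k (hk : k < Nat.find hex) => Nat.find_min hex hk
    generalize Nat.find hex = k at h1 hmn
    rcases k with _ | k
    · simp at h1
    · have h2 := hmn k (by omega)
      rw [not_not] at h2
      have h3 := order_gen (vfD_mId hδ) (fun r => ⟨evH r, sub_ev_mem r⟩)
        (GG_m hδ (S := {z | z.re ≤ w.re}) hmax) hf h2 h1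
      by_contra hcon
      push Not at hcon
      have : (k : ℝ) * w.re ≤ 0 := mul_nonpos_of_nonneg_of_nonpos (Nat.cast_nonneg k) hcon
      linarith
  have hb0 : evH b = 0 := mem_mId.1 hb
  have hlow : w₀.re ≤ - w.re := by
    rcases Q_lem hδ hh hh2 hhfin hw hmax hpos with h1 | ⟨l, hl, h1⟩
    · rw [hb0] at h1; simp at h1; linarith
    · rw [hb0] at h1
      have := hmin l hl
      simp at h1
      linarith
  have hδ' : ∀ i, (-δ) i ∈ mId n := fun i => (mId n).neg_mem (hδ i)
  have hf'' : vfD (-δ) f = (-1) * f := by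
    rw [vfD_apply] at hf ⊢
    have : applyVF (-δ) f = - applyVF δ f := map_neg (gradMap n f) δ
    rw [this, hf]; ring
  have hcase := Q_lem (w := -w₀) hδ' hf'' hf2 hffin (EV_neg.2 (by simpa using hw₀)) (by
    intro l hl
    have := hmin (-l) (EV_neg.1 hl)
    simp at this ⊢
    linarith) (by simp; linarith)
  rcases hcase with h1 | ⟨l, hl, h1⟩
  · simp at h1; linarith
  · have := hmax (-l) (EV_neg.1 hl)
    simp at h1 this
    linarith

end KeyLemma

section Bookkeeping

lemma fin_of_le {R : Type*} [CommRing R] [Algebra ℂ R] {I J : Ideal R} (h : I ≤ J)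
    (hI : FiniteDimensional ℂ (R ⧸ I)) : FiniteDimensional ℂ (R ⧸ J) :=
  FiniteDimensional.of_surjective (Ideal.Quotient.factorₐ ℂ h).toLinearMap
    (Ideal.Quotient.factor_surjective h)

lemma finrank_eq_iff {R : Type*} [CommRing R] [Algebra ℂ R] {I J : Ideal R} (h : I ≤ J)
    (hI : FiniteDimensional ℂ (R ⧸ I)) :
    Module.finrank ℂ (R ⧸ I) = Module.finrank ℂ (R ⧸ J) ↔ J ≤ I := by
  constructor
  · intro he
    have hJ := fin_of_le h hI
    have h1 := (LinearMap.injective_iff_surjective_of_finrank_eq_finrank he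
      (f := (Ideal.Quotient.factorₐ ℂ h).toLinearMap)).2 (Ideal.Quotient.factor_surjective h)
    intro x hx
    rw [← Ideal.Quotient.eq_zero_iff_mem]
    apply h1
    rw [map_zero]
    exact Ideal.Quotient.eq_zero_iff_mem.2 hx
  · intro h2
    rw [le_antisymm h h2]

lemma finrank_tau {R ι : Type*} [CommRing R] [Algebra ℂ R] (φ : (ι → R) →ₗ[R] R)
    (N : Submodule R (ι → R)) (L : Ideal R)
    (hfin : FiniteDimensional ℂ (R ⧸ (Submodule.map φ N ⊔ L : Ideal R))) :
    Module.finrank ℂ (R ⧸ (Submodule.map φ N ⊔ L : Ideal R)) =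
      Module.finrank ℂ (R ⧸ (LinearMap.range φ ⊔ L : Ideal R)) +
      Module.finrank ℂ ((ι → R) ⧸ (N ⊔ Submodule.comap φ L)) := by
  set A : Ideal R := Submodule.map φ N ⊔ L with hA
  set B : Ideal R := LinearMap.range φ ⊔ L with hB
  have hAB : A ≤ B := sup_le_sup_right (LinearMap.map_le_range) _
  let χ : (R ⧸ A) →ₗ[ℂ] (R ⧸ B) := (Ideal.Quotient.factorₐ ℂ hAB).toLinearMap
  have hχ : Function.Surjective χ := Ideal.Quotient.factor_surjective hAB
  have hker : ∀ v, φ v ∈ A ↔ v ∈ N ⊔ Submodule.comap φ L := by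
    intro v
    constructor
    · intro hv
      obtain ⟨y, ⟨u, hu, rfl⟩, z, hz, hyz⟩ := Submodule.mem_sup.1 hv
      have : v = u + (v - u) := by abel
      rw [this]
      refine Submodule.add_mem_sup hu ?_
      rw [Submodule.mem_comap, map_sub, ← hyz, add_sub_cancel_left]
      exact hz
    · intro hv
      obtain ⟨u, hu, z, hz, rfl⟩ := Submodule.mem_sup.1 hv
      rw [map_add]
      exact Submodule.add_mem_sup ⟨u, hu, rfl⟩ hz
  let ψ : (ι → R) →ₗ[R] (R ⧸ A) := (Submodule.mkQ A).comp φ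
  let θ : ((ι → R) ⧸ (N ⊔ Submodule.comap φ L)) →ₗ[R] (R ⧸ A) :=
    Submodule.liftQ _ ψ (fun v hv => Ideal.Quotient.eq_zero_iff_mem.2 ((hker v).2 hv))
  have hθ : Function.Injective (θ.restrictScalars ℂ) := by
    rw [injective_iff_map_eq_zero]
    intro a ha
    obtain ⟨v, rfl⟩ := Submodule.mkQ_surjective _ a
    have h1 : φ v ∈ A := Ideal.Quotient.eq_zero_iff_mem.1 ha
    rw [hker] at h1
    simpa using h1
  have hrange : LinearMap.range (θ.restrictScalars ℂ) = LinearMap.ker χ := by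
    ext a
    constructor
    · rintro ⟨v, rfl⟩
      obtain ⟨v, rfl⟩ := Submodule.mkQ_surjective _ v
      rw [LinearMap.mem_ker]
      exact Ideal.Quotient.eq_zero_iff_mem.2 (Ideal.mem_sup_left ⟨v, rfl⟩)
    · intro ha
      obtain ⟨r, rfl⟩ := Ideal.Quotient.mk_surjective a
      rw [LinearMap.mem_ker] at ha
      have h1 : r ∈ B := Ideal.Quotient.eq_zero_iff_mem.1 ha
      obtain ⟨y, ⟨u, rfl⟩, z, hz, hyz⟩ := Submodule.mem_sup.1 h1
      refine ⟨Submodule.mkQ _ u, ?_⟩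
      show Ideal.Quotient.mk A (φ u) = Ideal.Quotient.mk A r
      rw [Ideal.Quotient.eq, ← hyz, sub_add_cancel_left]
      exact A.neg_mem (Ideal.mem_sup_right hz)
  have h1 := LinearMap.finrank_range_add_finrank_ker χ
  rw [LinearMap.range_eq_top.2 hχ, finrank_top, ← hrange,
    LinearMap.finrank_range_of_inj hθ] at h1
  exact h1.symm

lemma Jac_eq (f : On n) : Jac n f = LinearMap.range (gradMap n f) := by
  ext g
  rw [Jac, Ideal.mem_span_range_iff_exists_fun]
  rfl

lemma mem_Jac {f g : On n} : g ∈ Jac n f ↔ ∃ δ, applyVF δ f = g := by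
  rw [Jac_eq]; rfl

lemma mem_BR {X : Set (Fin n → ℂ)} {f g : On n} :
    g ∈ BRIdeal n X f ↔ ∃ δ ∈ ThetaX n X, applyVF δ f = g := Iff.rfl

lemma tauX_eq (X : Set (Fin n → ℂ)) (f : On n)
    (hfin : FiniteDimensional ℂ (On n ⧸ BRIdeal n X f)) :
    tauX n X f = tau n f +
      Module.finrank ℂ ((Fin n → On n) ⧸ (ThetaX n X ⊔ ThetaF n f)) := by
  have h := finrank_tau (gradMap n f) (ThetaX n X) (Ideal.span {f}) (fin_of_le le_sup_left hfin)
  rw [← Jac_eq] at h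
  exact h

lemma sup_le_left_iff {R : Type*} [CommRing R] {I : Ideal R} {f : R} :
    I + Ideal.span {f} ≤ I ↔ f ∈ I := by
  rw [Submodule.add_eq_sup, sup_le_iff, Ideal.span_singleton_le_iff_mem]
  simp

lemma mu_eq_tau_iff {f : On n} (hfin : FiniteDimensional ℂ (On n ⧸ Jac n f)) :
    mu n f = tau n f ↔ f ∈ Jac n f := by
  rw [← sup_le_left_iff]
  exact finrank_eq_iff le_sup_left hfin

lemma muX_eq_tauX_iff {X : Set (Fin n → ℂ)} {f : On n}
    (hfin : FiniteDimensional ℂ (On n ⧸ BRIdeal n X f)) :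
    muX n X f = tauX n X f ↔ f ∈ BRIdeal n X f := by
  rw [← sup_le_left_iff]
  exact finrank_eq_iff le_sup_left hfin

/-- the third condition of the main statement. -/
def Third (X : Set (Fin n → ℂ)) (f h : On n) : Prop :=
  (Module.finrank ℂ (On n ⧸ (Ideal.span {f} + Jmin n f h)) : ℤ) - mu n f =
    Module.finrank ℂ ((Fin n → On n) ⧸ (ThetaX n X ⊔ ThetaF n f))

lemma third_iff {X : Set (Fin n → ℂ)} {f h : On n}
    (hfinX : FiniteDimensional ℂ (On n ⧸ BRIdeal n X f))
    (hmt : mu n f = tau n f) :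
    Third X f h ↔ Module.finrank ℂ (On n ⧸ (Ideal.span {f} + Jmin n f h)) = tauX n X f := by
  rw [Third, tauX_eq X f hfinX, ← hmt]
  omega

lemma all_of_eq {X : Set (Fin n → ℂ)} {f h : On n}
    (hffin : FiniteDimensional ℂ (On n ⧸ Jac n f))
    (hhfin : FiniteDimensional ℂ (On n ⧸ Jac n h))
    (hfinX : FiniteDimensional ℂ (On n ⧸ BRIdeal n X f))
    (h2 : f ∈ Jac n f) (h3 : h ∈ Jac n h)
    (h4 : BRIdeal n X f + Ideal.span {f} = Ideal.span {f} + Jmin n f h) :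
    mu n f = tau n f ∧ mu n h = tau n h ∧ Third X f h := by
  have h5 := (mu_eq_tau_iff hffin).2 h2
  refine ⟨h5, (mu_eq_tau_iff hhfin).2 h3, (third_iff hfinX h5).2 ?_⟩
  rw [← h4]; rfl

lemma applyVF_mul (δ : Fin n → On n) (a b : On n) :
    applyVF δ (a * b) = a * applyVF δ b + b * applyVF δ a := by
  rw [← vfD_apply, ← vfD_apply, ← vfD_apply, Derivation.leibniz]; rfl

lemma mem_ThetaX_iff {X : Set (Fin n → ℂ)} {h : On n} (hX : IX n X = Ideal.span {h})
    {δ : Fin n → On n} : δ ∈ ThetaX n X ↔ ∃ a, applyVF δ h = a * h := by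
  have h0 : δ ∈ ThetaX n X ↔ ∀ g ∈ IX n X, applyVF δ g ∈ IX n X := Iff.rfl
  rw [h0, hX]
  constructor
  · intro h1
    obtain ⟨a, ha⟩ := Ideal.mem_span_singleton'.1 (h1 h (Ideal.mem_span_singleton_self h))
    exact ⟨a, ha.symm⟩
  · rintro ⟨a, ha⟩ g hg
    obtain ⟨c, rfl⟩ := Ideal.mem_span_singleton'.1 hg
    rw [applyVF_mul, ha]
    refine Ideal.mem_span_singleton'.2 ⟨c * a + applyVF δ c, by ring⟩

lemma Jmin_le (f h : On n) : Jmin n f h ≤ Submodule.map (gradMap n f) (HamF n h) := by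
  refine Ideal.span_le.2 ?_
  rintro _ ⟨⟨i, j⟩, rfl⟩
  have e : ∀ g : On n, applyVF (Pi.single i (pd j h) - Pi.single j (pd i h)) g =
      pd j h * pd i g - pd i h * pd j g := by
    intro g
    have h1 : ∀ (k : Fin n) (c : On n), applyVF (Pi.single k c) g = c * pd k g := by
      intro k c
      rw [applyVF, Finset.sum_eq_single k]
      · rw [Pi.single_eq_same]
      · intro b _ hb
        rw [Pi.single_eq_of_ne hb, zero_mul]
      · simp
    rw [← h1, ← h1]
    exact map_sub (gradMap n g) _ _
  refine ⟨Pi.single i (pd j h) - Pi.single j (pd i h), ?_, ?_⟩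
  · show applyVF _ h = 0
    rw [e]; ring
  · show applyVF _ f = pd i f * pd j h - pd j f * pd i h
    rw [e]; ring

lemma Ham_le {f h : On n} (hhfin : FiniteDimensional ℂ (On n ⧸ Jac n h)) {κ : Fin n → On n}
    (hκ : applyVF κ h = 0) : applyVF κ f ∈ Jmin n f h := by
  obtain ⟨K, hK⟩ := exists_mId_pow_le hhfin
  let ex : (Fin n → On n) → ℕ → On n := fun a i => if hi : i < n then a ⟨i, hi⟩ else 0
  have hex : ∀ a (i : Fin n), ex a i = a i := fun a i => by simp [ex]
  have hsum : ∀ a b : Fin n → On n,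
      ∑ i ∈ Finset.range n, ex a i * ex b i = ∑ i, a i * b i := by
    intro a b
    rw [Finset.sum_range]
    exact Finset.sum_congr rfl fun i _ => by rw [hex, hex]
  have hspan : Jac n h ≤ Ideal.span {g | ∃ i, i < n ∧ g = ex (fun i => pd i h) i} := by
    refine Ideal.span_mono ?_
    rintro _ ⟨i, rfl⟩
    exact ⟨i, i.2, (hex (fun i => pd i h) i).symm⟩
  have := koszul_H1 n (ex fun i => pd i h) (ex coordG) (Jr n) Jr_zero
    (fun r hr => by rw [Jr_succ hr, ← hex coordG ⟨r, hr⟩])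
    (fun r hr g hg => by
      rw [← Fin.val_mk hr, hex coordG ⟨r, hr⟩] at hg
      exact Jr_regular hr hg)
    (fun r hr => ⟨K, by
      rw [← Fin.val_mk hr, hex coordG ⟨r, hr⟩]
      exact hspan (hK (Ideal.pow_mem_pow (coordG_mem _) K))⟩)
    (ex κ) ((hsum κ fun i => pd i h).trans hκ) (ex fun i => pd i f)
  have e : applyVF κ f = _ := (hsum κ fun i => pd i f).symm
  rw [e]
  refine Ideal.span_le.2 ?_ this
  rintro _ ⟨i, j, hi, hj, rfl⟩
  have e1 := hex (fun i => pd i f) ⟨i, hi⟩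
  have e2 := hex (fun i => pd i f) ⟨j, hj⟩
  have e3 := hex (fun i => pd i h) ⟨i, hi⟩
  have e4 := hex (fun i => pd i h) ⟨j, hj⟩
  simp only at e1 e2 e3 e4
  rw [e1, e2, e3, e4]
  exact Ideal.subset_span ⟨(⟨i, hi⟩, ⟨j, hj⟩), rfl⟩

theorem case_ge_two [NeZero n] {X : Set (Fin n → ℂ)} {f h : On n} (hX : IX n X = Ideal.span {h})
    (hf2 : f ∈ mId n ^ 2) (hh2 : h ∈ mId n ^ 2)
    (hffin : FiniteDimensional ℂ (On n ⧸ Jac n f))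
    (hhfin : FiniteDimensional ℂ (On n ⧸ Jac n h))
    (hfinX : FiniteDimensional ℂ (On n ⧸ BRIdeal n X f)) :
    muX n X f = tauX n X f ↔ (mu n f = tau n f ∧ mu n h = tau n h ∧ Third X f h) := by
  have hJB : Jmin n f h ≤ BRIdeal n X f := by
    refine (Jmin_le f h).trans (Submodule.map_mono ?_)
    intro δ hδ
    rw [mem_ThetaX_iff hX]
    exact ⟨0, by rw [zero_mul]; exact hδ⟩
  have hle : Ideal.span {f} + Jmin n f h ≤ BRIdeal n X f + Ideal.span {f} :=
    sup_le le_sup_right (hJB.trans le_sup_left)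
  constructor
  · intro hmt
    rw [muX_eq_tauX_iff hfinX, mem_BR] at hmt
    obtain ⟨δ, hδ, hδf⟩ := hmt
    obtain ⟨a, ha⟩ := (mem_ThetaX_iff hX).1 hδ
    obtain ⟨a', ha'⟩ := (key_lemma hδf ha hf2 hh2 hffin hhfin).exists_left_inv
    refine all_of_eq hffin hhfin hfinX (mem_Jac.2 ⟨δ, hδf⟩)
      (mem_Jac.2 ⟨a' • δ, by rw [applyVF_smul, ha, ← mul_assoc, ha', one_mul]⟩)
      (le_antisymm (sup_le ?_ le_sup_left) hle)
    rintro g ⟨ξ, hξ, rfl⟩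
    obtain ⟨c, hc⟩ := (mem_ThetaX_iff hX).1 hξ
    have h1 : ∀ g, applyVF (ξ - (c * a') • δ) g = applyVF ξ g - (c * a') * applyVF δ g := by
      intro g
      rw [← applyVF_smul]
      exact map_sub (gradMap n g) _ _
    have h2 : applyVF (ξ - (c * a') • δ) f ∈ Jmin n f h := by
      refine Ham_le hhfin ?_
      rw [h1, hc, ha]
      linear_combination (-c * h) * ha'
    rw [h1, hδf] at h2
    show applyVF ξ f ∈ _
    have h3 : applyVF ξ f = (c * a') * f + (applyVF ξ f - (c * a') * f) := by ring
    rw [h3]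
    exact Submodule.add_mem_sup (Ideal.mul_mem_left _ _ (Ideal.mem_span_singleton_self f)) h2
  · rintro ⟨h1, h2, h3⟩
    rw [muX_eq_tauX_iff hfinX]
    have h4 := (third_iff hfinX h1).1 h3
    rw [mu_eq_tau_iff hffin] at h1
    rw [mu_eq_tau_iff hhfin] at h2
    have hfinT : FiniteDimensional ℂ (On n ⧸ (Ideal.span {f} + Jmin n f h)) := by
      by_contra hcon
      have h5 : Module.finrank ℂ (On n ⧸ (Ideal.span {f} + Jmin n f h)) = 0 :=
        Module.finrank_of_not_finite hcon
      have h7 : FiniteDimensional ℂ (On n ⧸ (BRIdeal n X f + Ideal.span {f})) :=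
        fin_of_le le_sup_left hfinX
      have h6 : Module.finrank ℂ (On n ⧸ (BRIdeal n X f + Ideal.span {f})) = 0 := by
        rw [← h5, h4]; rfl
      have h8 := Module.finrank_zero_iff.1 h6
      have h9 : BRIdeal n X f + Ideal.span {f} = ⊤ := Ideal.Quotient.subsingleton_iff.1 h8
      have h10 : BRIdeal n X f + Ideal.span {f} ≤ mId n := by
        refine le_trans (sup_le ?_ ?_) (TjI_le hf2)
        · rintro g ⟨ξ, hξ, rfl⟩
          exact Jac_le_TjI f (mem_Jac.2 ⟨ξ, rfl⟩)
        · rw [Ideal.span_singleton_le_iff_mem]; exact self_mem_TjI f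
      rw [h9] at h10
      exact mId_ne_top (top_le_iff.1 h10)
    have h5 : BRIdeal n X f + Ideal.span {f} ≤ Ideal.span {f} + Jmin n f h :=
      (finrank_eq_iff hle hfinT).1 h4
    obtain ⟨η, hη⟩ := mem_Jac.1 h2
    have hηX : η ∈ ThetaX n X := (mem_ThetaX_iff hX).2 ⟨1, by rw [hη, one_mul]⟩
    have h6 : applyVF η f ∈ Ideal.span {f} + Jmin n f h :=
      h5 (Ideal.mem_sup_left ⟨η, hηX, rfl⟩)
    obtain ⟨y, hy, z, hz, hyz⟩ := Submodule.mem_sup.1 h6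
    obtain ⟨b, rfl⟩ := Ideal.mem_span_singleton'.1 hy
    obtain ⟨κ, hκ, rfl⟩ := Jmin_le f h hz
    have hκ' : applyVF κ h = 0 := hκ
    have hyz' : b * f + applyVF κ f = applyVF η f := hyz
    have e : ∀ g, applyVF (η - κ) g = applyVF η g - applyVF κ g :=
      fun g => map_sub (gradMap n g) _ _
    have e1 : applyVF (η - κ) h = h := by rw [e, hκ', hη, sub_zero]
    have e2 : applyVF (η - κ) f = b * f := by rw [e, ← hyz']; ring
    obtain ⟨b', hb'⟩ := (key_lemma e1 e2 hh2 hf2 hhfin hffin).exists_left_inv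
    have h7 : η - κ ∈ ThetaX n X := (mem_ThetaX_iff hX).2 ⟨1, by rw [e1, one_mul]⟩
    refine mem_BR.2 ⟨b' • (η - κ), Submodule.smul_mem _ _ h7, ?_⟩
    rw [applyVF_smul, e2, ← mul_assoc, hb', one_mul]

theorem case_zero {X : Set (Fin 0 → ℂ)} {f h : On 0} (hf : f ∈ mId 0) (hh : h ∈ mId 0)
    (hffin : FiniteDimensional ℂ (On 0 ⧸ Jac 0 f))
    (hhfin : FiniteDimensional ℂ (On 0 ⧸ Jac 0 h))
    (hfinX : FiniteDimensional ℂ (On 0 ⧸ BRIdeal 0 X f)) :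
    muX 0 X f = tauX 0 X f ↔ (mu 0 f = tau 0 f ∧ mu 0 h = tau 0 h ∧ Third X f h) := by
  have hz : ∀ g ∈ mId 0, g = 0 := by
    intro g hg
    rw [mId_eq_span, Set.range_eq_empty, Ideal.span_empty] at hg
    exact hg
  obtain rfl := hz f hf
  obtain rfl := hz h hh
  refine iff_of_true ((muX_eq_tauX_iff hfinX).2 (Ideal.zero_mem _))
    (all_of_eq hffin hhfin hfinX (Ideal.zero_mem _) (Ideal.zero_mem _) ?_)
  have h1 : BRIdeal 0 X 0 = ⊥ := by
    rw [eq_bot_iff]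
    rintro g ⟨ξ, hξ, rfl⟩
    show applyVF ξ 0 ∈ _
    simp [applyVF]
  have h2 : Jmin 0 0 0 = ⊥ := by
    rw [Jmin, Set.range_eq_empty, Ideal.span_empty]
  rw [h1, h2, add_comm]

lemma one_var {f : On 1} (hf2 : f ∈ mId 1 ^ 2) (hffin : FiniteDimensional ℂ (On 1 ⧸ Jac 1 f)) :
    ∃ (k : ℕ) (u v : On 1), IsUnit u ∧ IsUnit v ∧ f = coordG 0 ^ (k + 1) * u ∧
      pd 0 f = coordG 0 ^ k * v := by
  classical
  have hex := exists_not_mem_pow hffin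
  have h1 := Nat.find_spec hex
  have hmn := fun k (hk : k < Nat.find hex) => Nat.find_min hex hk
  generalize Nat.find hex = k at h1 hmn
  have hk : 3 ≤ k := by
    by_contra hcon
    exact h1 (Ideal.pow_le_pow_right (by omega) hf2)
  obtain ⟨k, rfl⟩ : ∃ j, k = j + 2 := ⟨k - 2, by omega⟩
  have h2 := hmn (k + 1) (by omega)
  rw [not_not, mId_one_pow] at h2
  obtain ⟨u, hu⟩ := Ideal.mem_span_singleton'.1 h2
  have huu : IsUnit u := by
    apply isUnit_On'
    intro hum
    apply h1
    rw [← hu, mul_comm, pow_succ]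
    exact Ideal.mul_mem_mul (Ideal.pow_mem_pow (coordG_mem 0) _) hum
  refine ⟨k, u, ((k + 1 : ℕ) : On 1) * u + coordG 0 * pd 0 u, huu, ?_, by rw [← hu, mul_comm], ?_⟩
  · apply isUnit_On
    have h3 : evH u ≠ 0 := (huu.map evH).ne_zero
    rw [map_add, map_mul, map_mul, mem_mId.1 (coordG_mem 0), zero_mul, add_zero, map_natCast]
    exact mul_ne_zero (by exact_mod_cast Nat.succ_ne_zero k) h3
  · have h4 : pd 0 (coordG (0 : Fin 1) ^ (k + 1)) = ((k + 1 : ℕ) : On 1) * coordG 0 ^ k := by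
      have := Derivation.leibniz_pow (pdD (0 : Fin 1)) (coordG 0) (k + 1)
      rw [nsmul_eq_mul, smul_eq_mul, Nat.add_sub_cancel, pdD_apply, pdD_apply, pd_coordG,
        if_pos rfl, mul_one] at this
      exact this
    rw [← hu, mul_comm, pd_mul, h4]
    ring

lemma IX_one {H : (Fin 1 → ℂ) → ℂ} (hH : AnalyticAt ℂ H 0) (hH0 : H 0 = 0)
    (hh2 : mkOn H hH ∈ mId 1 ^ 2)
    (hhfin : FiniteDimensional ℂ (On 1 ⧸ Jac 1 (mkOn H hH))) :
    IX 1 (H ⁻¹' {0}) = mId 1 := by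
  obtain ⟨k, u, v, hu, hv, he, _⟩ := one_var hh2 hhfin
  obtain ⟨U, hU, rfl⟩ := exists_mkOn u
  have hU0 : U 0 ≠ 0 := by
    have := (hu.map evH).ne_zero
    rwa [evH_mkOn] at this
  have e1 : mkOn (fun x : Fin 1 → ℂ => x 0 ^ (k + 1)) ((coord_an 0 0).pow (k + 1)) =
      coordG 0 ^ (k + 1) := by
    rw [coordG_eq]; exact Subtype.ext rfl
  rw [← e1, mkOn_mul, mkOn_eq_iff] at he
  ext g
  obtain ⟨G, hG, rfl⟩ := exists_mkOn g
  rw [mem_IX, mem_mId, evH_mkOn]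
  constructor
  · intro h1
    exact h1.self_of_nhds hH0
  · intro hG0
    filter_upwards [he, hU.continuousAt.eventually_ne hU0] with x hx hUx hHx
    have h1 : x 0 ^ (k + 1) * U x = 0 := by rw [← hx]; exact hHx
    have h2 : x 0 = 0 := by
      rcases mul_eq_zero.1 h1 with h | h
      · exact eq_zero_of_pow_eq_zero h
      · exact absurd h hUx
    have h3 : x = 0 := by
      funext i
      rw [Subsingleton.elim i 0]; exact h2
    rw [h3, hG0]

theorem case_one {X : Set (Fin 1 → ℂ)} {f h : On 1} (hX : IX 1 X = mId 1)
    (hf2 : f ∈ mId 1 ^ 2) (hh2 : h ∈ mId 1 ^ 2)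
    (hffin : FiniteDimensional ℂ (On 1 ⧸ Jac 1 f))
    (hhfin : FiniteDimensional ℂ (On 1 ⧸ Jac 1 h))
    (hfinX : FiniteDimensional ℂ (On 1 ⧸ BRIdeal 1 X f)) :
    muX 1 X f = tauX 1 X f ↔ (mu 1 f = tau 1 f ∧ mu 1 h = tau 1 h ∧ Third X f h) := by
  have hap : ∀ (δ : Fin 1 → On 1) (g : On 1), applyVF δ g = δ 0 * pd 0 g := by
    intro δ g
    rw [applyVF, Fin.sum_univ_one]
  have hE : ∀ g : On 1, g ∈ mId 1 ^ 2 → FiniteDimensional ℂ (On 1 ⧸ Jac 1 g) →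
      ∃ c d : On 1, c * coordG 0 * pd 0 g = g ∧ coordG 0 * pd 0 g = d * g := by
    intro g hg hgfin
    obtain ⟨k, u, v, hu, hv, h1, h2⟩ := one_var hg hgfin
    obtain ⟨u', hu'⟩ := hu.exists_left_inv
    obtain ⟨v', hv'⟩ := hv.exists_left_inv
    refine ⟨u * v', v * u', ?_, ?_⟩
    · rw [h2]
      calc u * v' * coordG 0 * (coordG 0 ^ k * v) = coordG 0 ^ (k + 1) * u * (v' * v) := by ring
        _ = g := by rw [hv', mul_one, h1]
    · rw [h2, h1]
      calc coordG 0 * (coordG 0 ^ k * v) = coordG 0 ^ (k + 1) * v * 1 := by ring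
        _ = _ := by rw [← hu']; ring
  have hTh : ∀ δ : Fin 1 → On 1, δ ∈ ThetaX 1 X ↔ δ 0 ∈ mId 1 := by
    intro δ
    have h0 : δ ∈ ThetaX 1 X ↔ ∀ g ∈ IX 1 X, applyVF δ g ∈ IX 1 X := Iff.rfl
    rw [h0, hX]
    constructor
    · intro h1
      have := h1 (coordG 0) (coordG_mem 0)
      rwa [hap, pd_coordG, if_pos rfl, mul_one] at this
    · intro h1 g _
      rw [hap]
      exact Ideal.mul_mem_right _ _ h1
  have hJac : ∀ g : On 1, g ∈ mId 1 ^ 2 → FiniteDimensional ℂ (On 1 ⧸ Jac 1 g) →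
      g ∈ Jac 1 g := by
    intro g hg hgfin
    obtain ⟨c, d, h1, h2⟩ := hE g hg hgfin
    exact mem_Jac.2 ⟨fun _ => c * coordG 0, by rw [hap]; exact h1⟩
  obtain ⟨c, d, h1, h2⟩ := hE f hf2 hffin
  have hfB : f ∈ BRIdeal 1 X f :=
    mem_BR.2 ⟨fun _ => c * coordG 0, (hTh _).2 (Ideal.mul_mem_left _ _ (coordG_mem 0)), by
      rw [hap]; exact h1⟩
  refine iff_of_true ((muX_eq_tauX_iff hfinX).2 hfB)
    (all_of_eq hffin hhfin hfinX (hJac f hf2 hffin) (hJac h hh2 hhfin) ?_)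
  have hJm : Jmin 1 f h = ⊥ := by
    rw [eq_bot_iff, Jmin, Ideal.span_le]
    rintro _ ⟨⟨i, j⟩, rfl⟩
    show pd i f * pd j h - pd j f * pd i h ∈ (⊥ : Ideal (On 1))
    rw [Subsingleton.elim i j, sub_self]
    exact Ideal.zero_mem _
  have hBR : BRIdeal 1 X f ≤ Ideal.span {f} := by
    rintro g ⟨ξ, hξ, rfl⟩
    have h3 := (hTh ξ).1 hξ
    have h4 := mId_one_pow (k := 1)
    rw [pow_one, pow_one] at h4
    rw [h4] at h3
    obtain ⟨e, he⟩ := Ideal.mem_span_singleton'.1 h3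
    show applyVF ξ f ∈ _
    rw [hap, ← he, mul_assoc, h2, ← mul_assoc]
    exact Ideal.mul_mem_left _ _ (Ideal.mem_span_singleton_self f)
  rw [hJm]
  exact le_antisymm (sup_le (hBR.trans le_sup_left) le_sup_left)
    (sup_le le_sup_right bot_le)

end Bookkeeping

/-- Corollary 2.6 (via the Lê–Greuel formula): `μ_X(f) = τ_X(f)` iff `μ(f) = τ(f)`,
`μ(h) = τ(h)` and `μ(f,h) = τ̄(f,h)`. -/
theorem muX_eq_tauX_iff_pair (n : ℕ)
    (F : (Fin n → ℂ) → ℂ) (hF : AnalyticAt ℂ F 0) (hF0 : F 0 = 0)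
    (H : (Fin n → ℂ) → ℂ) (hH : AnalyticAt ℂ H 0) (hH0 : H 0 = 0)
    (hFsing : mkOn F hF ∈ (mId n) ^ 2) (hHsing : mkOn H hH ∈ (mId n) ^ 2)
    (hFiso : FiniteDimensional ℂ (On n ⧸ Jac n (mkOn F hF)))
    (hHiso : FiniteDimensional ℂ (On n ⧸ Jac n (mkOn H hH)))
    (hfinX : FiniteDimensional ℂ (On n ⧸ BRIdeal n (H ⁻¹' {0}) (mkOn F hF)))
    (hfinY : FiniteDimensional ℂ (On n ⧸ BRIdeal n (F ⁻¹' {0}) (mkOn H hH))) :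
    muX n (H ⁻¹' {0}) (mkOn F hF) = tauX n (H ⁻¹' {0}) (mkOn F hF) ↔
      (mu n (mkOn F hF) = tau n (mkOn F hF) ∧
       mu n (mkOn H hH) = tau n (mkOn H hH) ∧
       (Module.finrank ℂ
          (On n ⧸ (Ideal.span {mkOn F hF} + Jmin n (mkOn F hF) (mkOn H hH))) : ℤ)
          - mu n (mkOn F hF) =
        Module.finrank ℂ
          ((Fin n → On n) ⧸ (ThetaX n (H ⁻¹' {0}) ⊔ ThetaF n (mkOn F hF)))) := by
  rcases n with _ | _ | n
  · exact case_zero (Ideal.pow_le_self (by norm_num) hFsing)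
      (Ideal.pow_le_self (by norm_num) hHsing) hFiso hHiso hfinX
  · exact case_one (IX_one hH hH0 hHsing hHiso) hFsing hHsing hFiso hHiso hfinX
  · exact case_ge_two (IX_eq_span (by omega) H hH hHiso) hFsing hHsing hFiso hHiso hfinX

end
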